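/- arXiv:2406.07335 — 2 statements merged into one kernel-verified Lean document; each statement's English description precedes it below -/
import Mathlib

section
/- Let ε, p ∈ (0,1] be constants and let x = (x₁, x₂, u) be a configuration with x₁ ∈ [ε·n, x₂] and u ≤ n/2, and set p_s = 1 − x₁/x₂. There exist constants c, C > 0 (depending only on ε and p) such that whenever p − p_s ≥ c·√(log n / n), the chain USD_p started from x satisfies Pr[T₁ ≤ C·n·log n] ≥ 1 − C·n^{-1}, where T₁ = inf{t ≥ 0 : X₁(t) = n}. -/
open MeasureTheory

/-- The one-step transition probability of the stubborn undecided-state dynamics `USD_p`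
with `n` agents, from configuration `c = (x₁, x₂, u)` to configuration `d`. -/
noncomputable def usdStep (n : ℕ) (p : ℝ) (c d : ℕ × ℕ × ℕ) : ℝ :=
  (if d = (c.1 - 1, c.2.1, c.2.2 + 1) then (1 - p) * (c.1 : ℝ) * (c.2.1 : ℝ) / (n : ℝ) ^ 2 else 0) +
  (if d = (c.1, c.2.1 - 1, c.2.2 + 1) then (c.1 : ℝ) * (c.2.1 : ℝ) / (n : ℝ) ^ 2 else 0) +
  (if d = (c.1 + 1, c.2.1, c.2.2 - 1) then (c.2.2 : ℝ) * (c.1 : ℝ) / (n : ℝ) ^ 2 else 0) +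
  (if d = (c.1, c.2.1 + 1, c.2.2 - 1) then (c.2.2 : ℝ) * (c.2.1 : ℝ) / (n : ℝ) ^ 2 else 0) +
  (if d = c then
    1 - ((2 - p) * (c.1 : ℝ) * (c.2.1 : ℝ) + (c.2.2 : ℝ) * ((c.1 : ℝ) + (c.2.1 : ℝ))) / (n : ℝ) ^ 2
  else 0)

/-- `μ` is the law of the trajectory `(X(t))_{t ≥ 0}` of `USD_p` with `n` agents started
from the configuration `x0`: it is a probability measure on paths whose finite-dimensional
cylinder probabilities are the products of the one-step transition probabilities. -/
def IsUSD (n : ℕ) (p : ℝ) (x0 : ℕ × ℕ × ℕ) (μ : Measure (ℕ → ℕ × ℕ × ℕ)) : Prop :=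
  IsProbabilityMeasure μ ∧
  ∀ (t : ℕ) (seq : ℕ → ℕ × ℕ × ℕ),
    (μ {ω | ∀ i ≤ t, ω i = seq i}).toReal =
      (if seq 0 = x0 then (1 : ℝ) else 0) *
        ∏ i ∈ Finset.range t, usdStep n p (seq i) (seq (i + 1))

/-- The weighted bias `Δ_w = x₁ - (1 - p)·x₂` of a configuration. -/
noncomputable def dw (p : ℝ) (c : ℕ × ℕ × ℕ) : ℝ := (c.1 : ℝ) - (1 - p) * (c.2.1 : ℝ)

/-!
Let `d = x₁ - (1 - p) x₂` be the weighted bias. Its expected one-step change is `u d / n²`, and its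
quadratic variation comes with changes of `u`, so `exp (-l d - 2 l² u)` is, up to normalisation, a
supermartingale as long as `d ≥ 4 l n`; a chain started at `d ≥ 7 l n` therefore keeps `d ≥ 4 l n`
up to probability `exp (-l² n)`. While it does, the Lyapunov function
`(24 / γ) (x₂ / d) (1 + n / x₁) + u / x₁` contracts by a factor `1 - Θ(1 / n)` per step in
expectation, provided `γ n² ≤ x₁² + n d + n u`. It is polynomial in `n` initially and at least
`1 / n` away from consensus, so `O(n log n)` steps suffice. Summing the two bounds gives a single
supersolution of the backward equation for the probability of not having reached consensus.

If `p < 1`, then `l = √(log n / n)` works, with `γ` depending only on `p`; if `p = 1`, then `d = x₁`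
and one takes `l` and `γ` proportional to `ε`.
-/

open Filter Topology

section MarkovChain

variable {S : Type*}

/-- The paths agreeing with `seq` up to and including time `t`. -/
def pathCylinder (t : ℕ) (seq : ℕ → S) : Set (ℕ → S) := {ω | ∀ i ≤ t, ω i = seq i}

/-- The paths that stay outside `A` from time `t` to time `t + k`. -/
def avoidingPaths (A : Set S) (t k : ℕ) : Set (ℕ → S) := {ω | ∀ i ∈ Set.Icc t (t + k), ω i ∉ A}

lemma mem_pathCylinder_update {t : ℕ} {seq ω : ℕ → S} (hω : ω ∈ pathCylinder t seq) :
    ω ∈ pathCylinder (t + 1) (Function.update seq (t + 1) (ω (t + 1))) := by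
  intro i hi
  rcases eq_or_ne i (t + 1) with rfl | hne
  · rw [Function.update_self]
  · rw [Function.update_of_ne hne]
    exact hω i (by omega)

lemma avoidingPaths_succ_subset {A : Set S} {t k : ℕ} :
    avoidingPaths A t (k + 1) ⊆ avoidingPaths A (t + 1) k :=
  fun _ hω i ⟨hlo, hhi⟩ => hω i ⟨by omega, by omega⟩

lemma pathCylinder_inter_avoidingPaths_of_mem {A : Set S} {t k : ℕ} {seq : ℕ → S}
    (hA : seq t ∈ A) : pathCylinder t seq ∩ avoidingPaths A t k = ∅ :=
  Set.eq_empty_of_forall_notMem fun _ ⟨hω, havoid⟩ =>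
    havoid t ⟨le_rfl, by omega⟩ (by rwa [hω t le_rfl])

/-- `H k c` is a supersolution of the backward equation for the probability of avoiding the
target `A` for `k` more steps from the state `c`, on a set `I` of states. Here `succs c` is a
finite set carrying the transitions out of `c`, and the backward inequality is required only
where the bound `H` is below `1`. -/
structure IsSupersolution (P : S → S → ℝ) (succs : S → Finset S) (I A : Set S)
    (H : ℕ → S → ℝ) : Prop where
  nonneg : ∀ k, ∀ c ∈ I, c ∈ A → 0 ≤ H k c
  one_le_zero : ∀ c ∈ I, c ∉ A → 1 ≤ H 0 c
  step : ∀ k, ∀ c ∈ I, c ∉ A → 1 ≤ H (k + 1) c ∨ ∑ d ∈ succs c, P c d * H k d ≤ H (k + 1) c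

variable [MeasurableSpace S] [DecidableEq S]

/-- `μ` is the path law of the Markov chain on `S` with transition probabilities `P` started
from `x₀`, in the sense of finite-dimensional cylinder probabilities. -/
def IsMarkovLaw (P : S → S → ℝ) (x₀ : S) (μ : Measure (ℕ → S)) : Prop :=
  IsProbabilityMeasure μ ∧
  ∀ (t : ℕ) (seq : ℕ → S),
    μ.real {ω | ∀ i ≤ t, ω i = seq i} =
      (if seq 0 = x₀ then (1 : ℝ) else 0) * ∏ i ∈ Finset.range t, P (seq i) (seq (i + 1))

variable {P : S → S → ℝ} {x₀ : S} {μ : Measure (ℕ → S)}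

lemma IsMarkovLaw.measureReal_pathCylinder_succ (hμ : IsMarkovLaw P x₀ μ) (t : ℕ) (seq : ℕ → S)
    (d : S) :
    μ.real (pathCylinder (t + 1) (Function.update seq (t + 1) d)) =
      μ.real (pathCylinder t seq) * P (seq t) d := by
  have hprod : ∏ i ∈ Finset.range t, P (Function.update seq (t + 1) d i)
      (Function.update seq (t + 1) d (i + 1)) = ∏ i ∈ Finset.range t, P (seq i) (seq (i + 1)) := by
    refine Finset.prod_congr rfl fun i hi => ?_
    have hit := Finset.mem_range.mp hi
    rw [Function.update_of_ne (by omega), Function.update_of_ne (by omega)]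
  unfold pathCylinder
  rw [hμ.2, hμ.2, Finset.prod_range_succ, hprod, Function.update_self,
    Function.update_of_ne (show t ≠ t + 1 by omega),
    Function.update_of_ne (show 0 ≠ t + 1 by omega), mul_assoc]

lemma IsMarkovLaw.measureReal_pathCylinder_zero (hμ : IsMarkovLaw P x₀ μ) :
    μ.real (pathCylinder 0 fun _ => x₀) = 1 := by
  unfold pathCylinder
  rw [hμ.2]
  simp

variable {succs : S → Finset S}

lemma IsMarkovLaw.measureReal_inter_le_sum [Countable S] (hμ : IsMarkovLaw P x₀ μ)
    (hsuccs : ∀ c, ∀ d ∉ succs c, P c d = 0) (t : ℕ) (seq : ℕ → S) (E : Set (ℕ → S)) :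
    μ.real (pathCylinder t seq ∩ E) ≤ ∑ d ∈ succs (seq t),
      μ.real (pathCylinder (t + 1) (Function.update seq (t + 1) d) ∩ E) := by
  have := hμ.1
  let ext (d : S) : Set (ℕ → S) := pathCylinder (t + 1) (Function.update seq (t + 1) d)
  let exceptional : Set (ℕ → S) := ⋃ d ∈ {d | d ∉ succs (seq t)}, ext d
  have hnull : μ.real exceptional = 0 := by
    rw [measureReal_eq_zero_iff (measure_ne_top μ _), measure_biUnion_null_iff (Set.to_countable _)]
    intro d hd
    rw [← measureReal_eq_zero_iff, hμ.measureReal_pathCylinder_succ, hsuccs _ d hd, mul_zero]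
  have hcover : pathCylinder t seq ∩ E ⊆ (⋃ d ∈ succs (seq t), ext d ∩ E) ∪ exceptional := by
    rintro ω ⟨hω, hE⟩
    have hext : ω ∈ ext (ω (t + 1)) := mem_pathCylinder_update hω
    by_cases hmem : ω (t + 1) ∈ succs (seq t)
    · exact Or.inl (Set.mem_biUnion hmem ⟨hext, hE⟩)
    · exact Or.inr (Set.mem_biUnion hmem hext)
  calc μ.real (pathCylinder t seq ∩ E)
      ≤ μ.real (⋃ d ∈ succs (seq t), ext d ∩ E) + μ.real exceptional :=
        (measureReal_mono hcover).trans (measureReal_union_le _ _)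
    _ = μ.real (⋃ d ∈ succs (seq t), ext d ∩ E) := by rw [hnull, add_zero]
    _ ≤ ∑ d ∈ succs (seq t), μ.real (ext d ∩ E) := measureReal_biUnion_finset_le _ _

variable {I A : Set S} {H : ℕ → S → ℝ}

lemma IsMarkovLaw.measureReal_avoidingPaths_succ_le [Countable S] (hμ : IsMarkovLaw P x₀ μ)
    (hsuccs : ∀ c, ∀ d ∉ succs c, P c d = 0) (hI : ∀ c ∈ I, ∀ d ∉ I, P c d = 0) {k t : ℕ}
    {h : S → ℝ} {seq : ℕ → S} (hc : seq t ∈ I)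
    (hk : ∀ seq : ℕ → S, seq (t + 1) ∈ I →
      μ.real (pathCylinder (t + 1) seq ∩ avoidingPaths A (t + 1) k) ≤
        μ.real (pathCylinder (t + 1) seq) * h (seq (t + 1))) :
    μ.real (pathCylinder t seq ∩ avoidingPaths A t (k + 1)) ≤
      μ.real (pathCylinder t seq) * ∑ d ∈ succs (seq t), P (seq t) d * h d := by
  have := hμ.1
  rw [Finset.mul_sum]
  refine (hμ.measureReal_inter_le_sum hsuccs t seq _).trans (Finset.sum_le_sum fun d _ => ?_)
  have hcyl := hμ.measureReal_pathCylinder_succ t seq d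
  by_cases hd : d ∈ I
  · have hk' := hk (Function.update seq (t + 1) d) (by rwa [Function.update_self])
    rw [hcyl, Function.update_self, mul_assoc] at hk'
    exact (measureReal_mono (Set.inter_subset_inter_right _ avoidingPaths_succ_subset)).trans hk'
  · rw [hI _ hc d hd, mul_zero] at hcyl
    rw [hI _ hc d hd, zero_mul, mul_zero, ← hcyl]
    exact measureReal_mono Set.inter_subset_left

lemma IsSupersolution.measureReal_avoidingPaths_le [Countable S]
    (hH : IsSupersolution P succs I A H) (hμ : IsMarkovLaw P x₀ μ)
    (hsuccs : ∀ c, ∀ d ∉ succs c, P c d = 0) (hI : ∀ c ∈ I, ∀ d ∉ I, P c d = 0) (k t : ℕ)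
    (seq : ℕ → S) (hc : seq t ∈ I) :
    μ.real (pathCylinder t seq ∩ avoidingPaths A t k) ≤
      μ.real (pathCylinder t seq) * H k (seq t) := by
  have := hμ.1
  induction k generalizing t seq with
  | zero =>
    by_cases hA : seq t ∈ A
    · rw [pathCylinder_inter_avoidingPaths_of_mem hA, measureReal_empty]
      exact mul_nonneg measureReal_nonneg (hH.nonneg 0 _ hc hA)
    · exact (measureReal_mono Set.inter_subset_left).trans
        (le_mul_of_one_le_right measureReal_nonneg (hH.one_le_zero _ hc hA))
  | succ k ih =>
    by_cases hA : seq t ∈ A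
    · rw [pathCylinder_inter_avoidingPaths_of_mem hA, measureReal_empty]
      exact mul_nonneg measureReal_nonneg (hH.nonneg (k + 1) _ hc hA)
    rcases hH.step k _ hc hA with hone | hstep
    · exact (measureReal_mono Set.inter_subset_left).trans
        (le_mul_of_one_le_right measureReal_nonneg hone)
    · exact (hμ.measureReal_avoidingPaths_succ_le hsuccs hI hc (ih (t + 1))).trans
        (mul_le_mul_of_nonneg_left hstep measureReal_nonneg)

theorem IsSupersolution.one_sub_le_measureReal_hits [Countable S]
    (hH : IsSupersolution P succs I A H) (hμ : IsMarkovLaw P x₀ μ)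
    (hsuccs : ∀ c, ∀ d ∉ succs c, P c d = 0) (hI : ∀ c ∈ I, ∀ d ∉ I, P c d = 0) (hx₀ : x₀ ∈ I)
    (T : ℕ) : 1 - H T x₀ ≤ μ.real {ω | ∃ t ≤ T, ω t ∈ A} := by
  have := hμ.1
  let start : Set (ℕ → S) := pathCylinder 0 fun _ => x₀
  have havoid : μ.real (start ∩ avoidingPaths A 0 T) ≤ H T x₀ := by
    simpa only [start, hμ.measureReal_pathCylinder_zero, one_mul] using
      hH.measureReal_avoidingPaths_le hμ hsuccs hI T 0 (fun _ => x₀) hx₀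
  have hcover : start ⊆ (start ∩ avoidingPaths A 0 T) ∪ {ω | ∃ t ≤ T, ω t ∈ A} := by
    intro ω hω
    by_cases hhit : ∃ t ≤ T, ω t ∈ A
    · exact Or.inr hhit
    · exact Or.inl ⟨hω, fun i ⟨_, hi⟩ hA => hhit ⟨i, by omega, hA⟩⟩
  have hone : 1 ≤ μ.real (start ∩ avoidingPaths A 0 T) + μ.real {ω | ∃ t ≤ T, ω t ∈ A} := by
    rw [← hμ.measureReal_pathCylinder_zero]
    exact (measureReal_mono hcover).trans (measureReal_union_le _ _)
  linarith

end MarkovChain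

/-- Real points of the simplex of configurations with total mass `n`. -/
structure IsRealConfig (n a b u : ℝ) : Prop where
  fst_nonneg : 0 ≤ a
  snd_nonneg : 0 ≤ b
  undecided_nonneg : 0 ≤ u
  sum_eq : a + b + u = n

/-- The weighted bias `dw` as a function of real opinion counts. -/
noncomputable def weightedBias (p a b : ℝ) : ℝ := a - (1 - p) * b

/-- The generator of `USD_p` scaled by `n²`: the expected one-step change of `g` at the
configuration `(a, b, u)`, times `n²`. -/
noncomputable def drift (p : ℝ) (g : ℝ → ℝ → ℝ → ℝ) (a b u : ℝ) : ℝ :=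
  (1 - p) * a * b * (g (a - 1) b (u + 1) - g a b u) + a * b * (g a (b - 1) (u + 1) - g a b u)
  + u * a * (g (a + 1) b (u - 1) - g a b u) + u * b * (g a (b + 1) (u - 1) - g a b u)

/-- An upper bound, relative to the size of the potential, on the error of replacing the drift
of a potential with denominator `d` by its first-order Taylor expansion. -/
noncomputable def taylorError (n d : ℝ) : ℝ := 8 * n ^ 2 / d ^ 2 + 2 * n / d

/-- The part of the Lyapunov function that measures the remaining support of Opinion 2. -/
noncomputable def oppositionPotential (p n : ℝ) : ℝ → ℝ → ℝ → ℝ :=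
  (fun a b _ => b / weightedBias p a b) +
    n • (fun a b _ => b / (weightedBias p a b * a) : ℝ → ℝ → ℝ → ℝ)

/-- The Lyapunov function of the dynamics, which is at least `1 / n` away from consensus on
Opinion 1. -/
noncomputable def consensusPotential (p γ n : ℝ) : ℝ → ℝ → ℝ → ℝ :=
  (24 / γ) • oppositionPotential p n + fun a _ u => u / a

/-- The relative rate, per `n` steps, at which `consensusPotential` decreases in expectation. -/
noncomputable def contractionRate (p γ : ℝ) : ℝ := min (γ / 8) (p / 4)

/-- The supermartingale that controls the event that the weighted bias falls below `4 l n`,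
where it is at least `1`. -/
noncomputable def escapePotential (p l n : ℝ) : ℝ → ℝ → ℝ → ℝ :=
  fun a b u => Real.exp (2 * l ^ 2 * (n - u) - l * (weightedBias p a b - 4 * l * n))

section Drift

variable {p γ l n a b u d s β : ℝ}

lemma drift_add (f g : ℝ → ℝ → ℝ → ℝ) :
    drift p (f + g) a b u = drift p f a b u + drift p g a b u := by
  simp only [drift, Pi.add_apply]
  ring

lemma drift_smul (r : ℝ) (f : ℝ → ℝ → ℝ → ℝ) : drift p (r • f) a b u = r * drift p f a b u := by
  simp only [drift, Pi.smul_apply, smul_eq_mul]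
  ring

lemma weightedBias_le (hp : p ≤ 1) (hb : 0 ≤ b) : weightedBias p a b ≤ a :=
  sub_le_self _ (mul_nonneg (sub_nonneg.mpr hp) hb)

lemma weightedBias_add_left : weightedBias p (a + s) b = weightedBias p a b + s := by
  unfold weightedBias
  ring

lemma weightedBias_add_right : weightedBias p a (b + s) = weightedBias p a b - (1 - p) * s := by
  unfold weightedBias
  ring

lemma IsRealConfig.fst_le (hc : IsRealConfig n a b u) : a ≤ n := by
  linarith [hc.snd_nonneg, hc.undecided_nonneg, hc.sum_eq]

lemma IsRealConfig.transition_rate_le (hc : IsRealConfig n a b u) (hp : 0 ≤ p) :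
    (1 - p) * a * b + a * b + u * a + u * b ≤ n ^ 2 := by
  have hab := mul_nonneg hc.fst_nonneg hc.snd_nonneg
  have hau := mul_nonneg hc.fst_nonneg hc.undecided_nonneg
  have hbu := mul_nonneg hc.snd_nonneg hc.undecided_nonneg
  rw [← hc.sum_eq]
  linarith [mul_nonneg hp hab, sq_nonneg a, sq_nonneg b, sq_nonneg u]

lemma IsRealConfig.one_sub_mul_le (hc : IsRealConfig n a b u) (hp : 0 ≤ p) :
    (1 - p) * (a + u) ≤ n := by
  have := mul_nonneg hp (add_nonneg hc.fst_nonneg hc.undecided_nonneg)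
  linarith [hc.snd_nonneg, hc.sum_eq]

lemma div_add_sub_div_le (hb : 0 ≤ b) (hd : 2 ≤ d) (hs : |s| ≤ 1) (hβs : β * s ≤ 0) :
    (b + β) / (d + s) - b / d ≤ (β - s * (b / d)) / d + 2 / d ^ 2 * (b / d - β * s) := by
  have hs' := abs_le.mp hs
  have : 0 < d := by linarith
  have : 0 < d + s := by linarith
  have hexact : (b + β) / (d + s) - b / d =
      (β - s * (b / d)) / d + 1 / (d * (d + s)) * (s ^ 2 * (b / d) - β * s) := by
    field_simp
    ring
  have hinv : 1 / (d * (d + s)) ≤ 2 / d ^ 2 := by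
    rw [div_le_div_iff₀ (by positivity) (by positivity)]
    nlinarith
  have hratio : 0 ≤ b / d := by positivity
  have hsq : s ^ 2 * (b / d) ≤ b / d :=
    mul_le_of_le_one_left hratio ((sq_le_one_iff_abs_le_one s).mpr hs)
  rw [hexact]
  gcongr
  linarith [mul_nonneg (sq_nonneg s) hratio]

lemma inv_one_add_mul_one_add_le {x y i : ℝ} (hi : i ≤ 1 / 4) (hx : |x| ≤ i) (hy : |y| ≤ i)
    (hxy : 0 ≤ x * y) : 1 / ((1 + x) * (1 + y)) ≤ 1 - x - y + 8 * i ^ 2 := by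
  have hx' := abs_le.mp hx
  have hy' := abs_le.mp hy
  have : 0 ≤ i := (abs_nonneg x).trans hx
  have hx2 : x ^ 2 ≤ i ^ 2 := sq_le_sq' hx'.1 hx'.2
  have hy2 : y ^ 2 ≤ i ^ 2 := sq_le_sq' hy'.1 hy'.2
  have hxy2 : x * y ≤ i ^ 2 := by linarith [sq_nonneg (x - y)]
  have hprod : 1 / 2 ≤ (1 + x) * (1 + y) := by nlinarith
  rw [div_le_iff₀ (by linarith)]
  have hhigher : x * y * (x + y) ≤ i ^ 2 * (1 / 2) := by
    nlinarith
  nlinarith [mul_le_mul_of_nonneg_left hprod (sq_nonneg i)]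

lemma div_mul_shift_sub_le (hb : 0 ≤ b) (hd : 4 ≤ d) (hda : d ≤ a) (hs : |s| ≤ 1) :
    b / ((d + s) * (a + s)) - b / (d * a) ≤
      b / (d * a) * (-s / d - s / a + 8 / d ^ 2) := by
  have hd0 : 0 < d := by linarith
  have ha0 : 0 < a := by linarith
  have hs' := abs_le.mp hs
  have hinv : 1 / ((1 + s / d) * (1 + s / a)) ≤ 1 - s / d - s / a + 8 * (1 / d) ^ 2 := by
    refine inv_one_add_mul_one_add_le ?_ ?_ ?_ ?_
    · gcongr
    · rw [abs_div, abs_of_pos hd0]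
      gcongr
    · rw [abs_div, abs_of_pos ha0]
      gcongr
    · rw [div_mul_div_comm]
      exact div_nonneg (mul_self_nonneg s) (by positivity)
  have hds : d + s ≠ 0 := by linarith
  have has : a + s ≠ 0 := by linarith
  calc b / ((d + s) * (a + s)) - b / (d * a)
      = b / (d * a) * (1 / ((1 + s / d) * (1 + s / a)) - 1) := by field_simp
    _ ≤ b / (d * a) * (1 - s / d - s / a + 8 * (1 / d) ^ 2 - 1) := by gcongr
    _ = b / (d * a) * (-s / d - s / a + 8 / d ^ 2) := by ring

lemma drift_div_weightedBias_le (hp0 : 0 ≤ p) (hp1 : p ≤ 1) (hc : IsRealConfig n a b u)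
    (hd : 2 ≤ weightedBias p a b) :
    drift p (fun a b _ => b / weightedBias p a b) a b u ≤
      b / weightedBias p a b * (-a + taylorError n (weightedBias p a b)) := by
  have hrate := hc.transition_rate_le hp0
  have hqn := hc.one_sub_mul_le hp0
  obtain ⟨ha, hb, hu, -⟩ := hc
  set q := 1 - p with hq
  have : 0 ≤ q := by linarith
  have hq1 : |q| ≤ 1 := abs_le.mpr ⟨by linarith, by linarith⟩
  set d := weightedBias p a b with hdef
  have hd0 : 0 < d := by linarith
  have : 0 ≤ b / d := by positivity
  have dec_fst := div_add_sub_div_le (β := 0) (s := -1) hb hd (by norm_num) (by norm_num)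
  have dec_snd := div_add_sub_div_le (β := -1) (s := q) hb hd hq1 (by linarith)
  have inc_fst := div_add_sub_div_le (β := 0) (s := 1) hb hd (by norm_num) (by norm_num)
  have inc_snd := div_add_sub_div_le (β := 1) (s := -q) hb hd (by rwa [abs_neg]) (by linarith)
  calc drift p (fun a b _ => b / weightedBias p a b) a b u
      = q * a * b * ((b + 0) / (d + -1) - b / d) + a * b * ((b + -1) / (d + q) - b / d)
        + u * a * ((b + 0) / (d + 1) - b / d) + u * b * ((b + 1) / (d + -q) - b / d) := by
        simp only [drift, sub_eq_add_neg, weightedBias_add_left, weightedBias_add_right, ← hdef]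
        simp only [← sub_eq_add_neg, ← hq]
        ring_nf
    _ ≤ q * a * b * ((0 - -1 * (b / d)) / d + 2 / d ^ 2 * (b / d - 0 * -1))
        + a * b * ((-1 - q * (b / d)) / d + 2 / d ^ 2 * (b / d - -1 * q))
        + u * a * ((0 - 1 * (b / d)) / d + 2 / d ^ 2 * (b / d - 0 * 1))
        + u * b * ((1 - -q * (b / d)) / d + 2 / d ^ 2 * (b / d - 1 * -q)) := by gcongr
    -- The drift is a multiple of `b / d` only because `d = a - q * b`: the last summand vanishes.
    _ = b / d * (-a + 2 * (q * a * b + a * b + u * a + u * b) / d ^ 2 + 2 * (q * (a + u)) / d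
        + u * (1 - (a - q * b) / d)) := by
        field_simp
        ring
    _ = b / d * (-a + 2 * (q * a * b + a * b + u * a + u * b) / d ^ 2
        + 2 * (q * (a + u)) / d) := by
        rw [show a - q * b = d from rfl, div_self hd0.ne', sub_self, mul_zero, add_zero]
    _ ≤ b / d * (-a + 2 * n ^ 2 / d ^ 2 + 2 * n / d) := by gcongr
    _ ≤ b / d * (-a + taylorError n d) := by
        rw [taylorError, ← add_assoc]
        gcongr
        norm_num

lemma drift_div_weightedBias_mul_le (hp0 : 0 ≤ p) (hp1 : p ≤ 1) (hc : IsRealConfig n a b u)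
    (hd : 4 ≤ weightedBias p a b) :
    drift p (fun a b _ => b / (weightedBias p a b * a)) a b u ≤
      b / (weightedBias p a b * a) *
        (-(u + weightedBias p a b) + taylorError n (weightedBias p a b)) := by
  have hrate := hc.transition_rate_le hp0
  have hqn := hc.one_sub_mul_le hp0
  obtain ⟨ha, hb, hu, -⟩ := hc
  have hda := weightedBias_le (a := a) hp1 hb
  set q := 1 - p with hq
  have : 0 ≤ q := by linarith
  have hq1 : |q| ≤ 1 := abs_le.mpr ⟨by linarith, by linarith⟩
  set d := weightedBias p a b with hdef
  have hd0 : 0 < d := by linarith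
  have ha0 : 0 < a := by linarith
  have : 0 ≤ b / (d * a) := by positivity
  have dec_fst := div_mul_shift_sub_le (s := -1) hb hd hda (by norm_num)
  have dec_snd := div_add_sub_div_le (d := d) (β := -1) (s := q) hb (by linarith) hq1 (by linarith)
  have inc_fst := div_mul_shift_sub_le (s := 1) hb hd hda (by norm_num)
  have inc_snd := div_add_sub_div_le (d := d) (β := 1) (s := -q) hb (by linarith)
    (by rwa [abs_neg]) (by linarith)
  have hsecond : 8 * (q * a * b) + 2 * (a * b) + 8 * (u * a) + 2 * (u * b) ≤ 8 * n ^ 2 := by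
    linarith [mul_nonneg ha hb, mul_nonneg hu hb]
  calc drift p (fun a b _ => b / (weightedBias p a b * a)) a b u
      = q * a * b * (b / ((d + -1) * (a + -1)) - b / (d * a))
        + a * b * (((b + -1) / (d + q) - b / d) / a)
        + u * a * (b / ((d + 1) * (a + 1)) - b / (d * a))
        + u * b * (((b + 1) / (d + -q) - b / d) / a) := by
        simp only [drift, sub_eq_add_neg, weightedBias_add_left, weightedBias_add_right, ← hdef]
        simp only [← sub_eq_add_neg, ← hq, sub_div, div_div]
        ring_nf
    _ ≤ q * a * b * (b / (d * a) * (- -1 / d - -1 / a + 8 / d ^ 2))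
        + a * b * (((-1 - q * (b / d)) / d + 2 / d ^ 2 * (b / d - -1 * q)) / a)
        + u * a * (b / (d * a) * (-1 / d - 1 / a + 8 / d ^ 2))
        + u * b * (((1 - -q * (b / d)) / d + 2 / d ^ 2 * (b / d - 1 * -q)) / a) := by gcongr
    _ = b / (d * a) * (-(u + (a - q * b))
        + ((8 * (q * a * b) + 2 * (a * b) + 8 * (u * a) + 2 * (u * b)) / d ^ 2
          + 2 * (q * (a + u)) / d) + u * (1 - (a - q * b) / d)) := by
        field_simp
        ring
    _ = b / (d * a) * (-(u + d)
        + ((8 * (q * a * b) + 2 * (a * b) + 8 * (u * a) + 2 * (u * b)) / d ^ 2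
          + 2 * (q * (a + u)) / d)) := by
        rw [show a - q * b = d from rfl, div_self hd0.ne', sub_self, mul_zero, add_zero]
    _ ≤ b / (d * a) * (-(u + d) + taylorError n d) := by
        unfold taylorError
        gcongr

lemma drift_undecided_div_le (hp0 : 0 < p) (hp1 : p ≤ 1) (hc : IsRealConfig n a b u)
    (ha8 : 8 / p ≤ a) :
    drift p (fun a _ u => u / a) a b u ≤ 3 * b - p / 4 * n * (u / a) := by
  obtain ⟨-, hb, hu, hsum⟩ := hc
  have hpa : 8 ≤ a * p := by rwa [div_le_iff₀ hp0] at ha8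
  have ha : 8 ≤ a := ((le_div_iff₀ hp0).mpr (by linarith)).trans ha8
  have : 0 < a := by linarith
  have ha1 : 0 < a - 1 := by linarith
  have : 0 ≤ 1 - p := by linarith
  set v := u / a
  have hv : 0 ≤ v := by positivity
  have hbv := mul_nonneg hb hv
  have hpred : a / (a - 1) ≤ 1 + p / 4 := by
    rw [div_le_iff₀ ha1]
    linarith
  have hsucc : 1 / 2 ≤ a / (a + 1) := by
    rw [div_le_div_iff₀ (by norm_num) (by linarith)]
    linarith
  have hcoef : (1 - p) * (1 + p / 4) ≤ 1 - 3 / 4 * p := by linarith [sq_nonneg p]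
  calc drift p (fun a _ u => u / a) a b u
      = b * (1 + v) * ((1 - p) * (a / (a - 1))) + b - v * (a + u) * (a / (a + 1)) - v * b := by
        simp only [drift, v]
        field_simp
        ring
    _ ≤ b * (1 + v) * ((1 - p) * (1 + p / 4)) + b - v * (a + u) * (1 / 2) - v * b := by gcongr
    _ ≤ b * (1 + v) * (1 - 3 / 4 * p) + b - v * (a + u) * (p / 4) - v * b := by
        gcongr
        linarith
    _ ≤ 3 * b - p / 4 * n * v := by
        rw [← hsum]
        linarith [mul_nonneg hp0.le hbv, mul_nonneg hp0.le hb]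

lemma taylorError_le (hγ0 : 0 < γ) (hγ1 : γ ≤ 1) (hn : 1 ≤ n) (hd : 16 / γ * √n ≤ d) :
    taylorError n d ≤ γ / 4 * n := by
  have hs1 : 1 ≤ √n := Real.one_le_sqrt.mpr hn
  have hsq : √n ^ 2 = n := Real.sq_sqrt (by linarith)
  have hd0 : 0 < d := lt_of_lt_of_le (by positivity) hd
  have hsd : √n / d ≤ γ / 16 := by
    rw [div_le_div_iff₀ hd0 (by norm_num)]
    rw [div_mul_eq_mul_div, div_le_iff₀ hγ0] at hd
    linarith
  calc taylorError n d = 8 * n * (√n / d) ^ 2 + 2 * √n * (√n / d) := by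
        rw [taylorError, mul_assoc 2, ← mul_div_assoc (√n), ← sq, div_pow, hsq]
        ring
    _ ≤ 8 * n * (γ / 16) ^ 2 + 2 * √n * (γ / 16) := by gcongr
    _ ≤ 8 * n * (γ / 16) ^ 2 + 2 * √n ^ 2 * (γ / 16) := by
        gcongr
        exact le_self_pow₀ hs1 two_ne_zero
    _ = γ * n * (γ / 32 + 1 / 8) := by
        rw [hsq]
        ring
    _ ≤ γ * n * (1 / 4) := by
        gcongr
        linarith
    _ = γ / 4 * n := by ring

lemma one_le_div_mul_sqrt {r : ℝ} (hγ0 : 0 < γ) (hγ1 : γ ≤ 1) (hr : 1 ≤ r) (hn : 1 ≤ n) :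
    r ≤ r / γ * √n :=
  (le_div_self (by linarith) hγ0 hγ1).trans
    (le_mul_of_one_le_right (by positivity) (Real.one_le_sqrt.mpr hn))

lemma drift_oppositionPotential_le (hp0 : 0 ≤ p) (hp1 : p ≤ 1) (hγ0 : 0 < γ) (hγ1 : γ ≤ 1)
    (hn : 1 ≤ n) (hc : IsRealConfig n a b u) (hd : 16 / γ * √n ≤ weightedBias p a b)
    (hg : γ * n ^ 2 ≤ a ^ 2 + n * weightedBias p a b + n * u) :
    drift p (oppositionPotential p n) a b u ≤ -(γ / 4) * n * oppositionPotential p n a b u := by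
  have hd16 : 16 ≤ weightedBias p a b :=
    (one_le_div_mul_sqrt hγ0 hγ1 (by norm_num) hn).trans hd
  have hda := weightedBias_le (a := a) hp1 hc.snd_nonneg
  have hfst := drift_div_weightedBias_le hp0 hp1 hc (by linarith)
  have hsnd := drift_div_weightedBias_mul_le hp0 hp1 hc (by linarith)
  have herr := taylorError_le hγ0 hγ1 hn hd
  have hb := hc.snd_nonneg
  have han := hc.fst_le
  rw [oppositionPotential, drift_add, drift_smul]
  simp only [Pi.add_apply, Pi.smul_apply, smul_eq_mul]
  set d := weightedBias p a b
  set E := taylorError n d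
  have : 0 < d := by linarith
  have : 0 < a := by linarith
  have habsorb : (E + γ / 4 * n) * (a + n) ≤ a ^ 2 + n * d + n * u :=
    calc (E + γ / 4 * n) * (a + n) ≤ (γ / 4 * n + γ / 4 * n) * (n + n) := by gcongr
      _ = γ * n ^ 2 := by ring
      _ ≤ a ^ 2 + n * d + n * u := hg
  calc drift p (fun a b _ => b / weightedBias p a b) a b u +
        n * drift p (fun a b _ => b / (weightedBias p a b * a)) a b u
      ≤ b / d * (-a + E) + n * (b / (d * a) * (-(u + d) + E)) := by gcongr
    _ = -(γ / 4) * n * (b / d + n * (b / (d * a))) +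
        b / (d * a) * ((E + γ / 4 * n) * (a + n) - (a ^ 2 + n * d + n * u)) := by
        field_simp
        ring
    _ ≤ -(γ / 4) * n * (b / d + n * (b / (d * a))) :=
        add_le_of_nonpos_right
          (mul_nonpos_of_nonneg_of_nonpos (by positivity) (sub_nonpos.mpr habsorb))

lemma oppositionPotential_nonneg (hc : IsRealConfig n a b u) (hd : 0 ≤ weightedBias p a b) :
    0 ≤ oppositionPotential p n a b u := by
  obtain ⟨ha, hb, hu, rfl⟩ := hc
  simp only [oppositionPotential, Pi.add_apply, Pi.smul_apply, smul_eq_mul]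
  positivity

lemma consensusPotential_eq : consensusPotential p γ n a b u =
    24 / γ * oppositionPotential p n a b u + u / a := rfl

lemma snd_le_mul_oppositionPotential (hp : p ≤ 1) (hc : IsRealConfig n a b u)
    (hd : 0 < weightedBias p a b) : b ≤ n * oppositionPotential p n a b u := by
  have hdn := (weightedBias_le (a := a) hp hc.snd_nonneg).trans hc.fst_le
  obtain ⟨ha, hb, -, -⟩ := hc
  have hn : 0 < n := by linarith
  simp only [oppositionPotential, Pi.add_apply, Pi.smul_apply, smul_eq_mul]
  set d := weightedBias p a b
  calc b = d * (b / d) := by field_simp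
    _ ≤ n * (b / d + n * (b / (d * a))) := by
        gcongr
        exact le_add_of_nonneg_right (by positivity)

lemma drift_consensusPotential_le (hp0 : 0 < p) (hp1 : p ≤ 1) (hγ0 : 0 < γ) (hγ1 : γ ≤ 1)
    (hn : 1 ≤ n) (hc : IsRealConfig n a b u) (hd : (16 / γ + 8 / p) * √n ≤ weightedBias p a b)
    (hg : γ * n ^ 2 ≤ a ^ 2 + n * weightedBias p a b + n * u) :
    drift p (consensusPotential p γ n) a b u ≤
      -contractionRate p γ * n * consensusPotential p γ n a b u := by
  have h16 : 16 ≤ 16 / γ * √n := one_le_div_mul_sqrt hγ0 hγ1 (by norm_num) hn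
  have h8 : 8 / p ≤ 8 / p * √n :=
    le_mul_of_one_le_right (by positivity) (Real.one_le_sqrt.mpr hn)
  have h8' : 0 < 8 / p := by positivity
  rw [add_mul] at hd
  have hda := weightedBias_le (a := a) hp1 hc.snd_nonneg
  have ha0 := hc.fst_nonneg
  have hu0 := hc.undecided_nonneg
  have hopp := drift_oppositionPotential_le hp0.le hp1 hγ0 hγ1 hn hc (by linarith) hg
  have hund := drift_undecided_div_le hp0 hp1 hc (by linarith)
  have hbP := snd_le_mul_oppositionPotential hp1 hc (by linarith)
  have hP := oppositionPotential_nonneg hc (show 0 ≤ weightedBias p a b by linarith)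
  rw [consensusPotential_eq, consensusPotential, drift_add, drift_smul]
  set P := oppositionPotential p n a b u
  have hmγ : contractionRate p γ ≤ γ / 8 := min_le_left _ _
  have hmp : contractionRate p γ ≤ p / 4 := min_le_right _ _
  calc 24 / γ * drift p (oppositionPotential p n) a b u + drift p (fun a _ u => u / a) a b u
      ≤ 24 / γ * (-(γ / 4) * n * P) + (3 * (n * P) - p / 4 * n * (u / a)) := by
        gcongr
        exact hund.trans (by linarith)
    _ = -(γ / 8 * n * (24 / γ * P) + p / 4 * n * (u / a)) := by
        field_simp
        ring
    _ ≤ -(contractionRate p γ * n * (24 / γ * P) + contractionRate p γ * n * (u / a)) := by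
        gcongr
    _ = -contractionRate p γ * n * (24 / γ * P + u / a) := by ring

lemma consensusPotential_nonneg (hγ : 0 < γ) (hc : IsRealConfig n a b u)
    (hd : 0 ≤ weightedBias p a b) : 0 ≤ consensusPotential p γ n a b u := by
  have hP := oppositionPotential_nonneg hc hd
  obtain ⟨ha, -, hu, -⟩ := hc
  rw [consensusPotential_eq]
  positivity

lemma one_le_mul_consensusPotential (hp : p ≤ 1) (hγ0 : 0 < γ) (hγ1 : γ ≤ 1)
    (hc : IsRealConfig n a b u) (hd : 0 < weightedBias p a b) (hbu : 1 ≤ b ∨ 1 ≤ u) :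
    1 ≤ n * consensusPotential p γ n a b u := by
  have hbP := snd_le_mul_oppositionPotential hp hc hd
  have ha0 : 0 < a := hd.trans_le (weightedBias_le hp hc.snd_nonneg)
  have han := hc.fst_le
  have hb := hc.snd_nonneg
  have hu := hc.undecided_nonneg
  have hcoef : 1 ≤ 24 / γ := (one_le_div hγ0).mpr (by linarith)
  have hopp : b ≤ 24 / γ * (n * oppositionPotential p n a b u) :=
    hbP.trans (le_mul_of_one_le_left (hb.trans hbP) hcoef)
  have hund : u ≤ n * (u / a) := by
    rw [← mul_div_assoc, le_div_iff₀ ha0, mul_comm]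
    gcongr
  rw [consensusPotential_eq, mul_add, mul_left_comm]
  rcases hbu with h | h <;> linarith

lemma consensusPotential_le (hp : p ≤ 1) (hγ0 : 0 < γ) (hγ1 : γ ≤ 1) (hc : IsRealConfig n a b u)
    (hd : 1 ≤ weightedBias p a b) : consensusPotential p γ n a b u ≤ 49 / γ * n ^ 2 := by
  have ha : 1 ≤ a := hd.trans (weightedBias_le hp hc.snd_nonneg)
  have hn : 1 ≤ n := ha.trans hc.fst_le
  obtain ⟨-, hb, hu, hsum⟩ := hc
  have hnn : n ≤ n ^ 2 := le_self_pow₀ hn two_ne_zero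
  have hda : 1 ≤ weightedBias p a b * a := one_le_mul_of_one_le_of_one_le hd ha
  have hb_div : b / weightedBias p a b ≤ n ^ 2 := (div_le_self hb hd).trans (by linarith)
  have hb_div_mul : b / (weightedBias p a b * a) ≤ n := (div_le_self hb hda).trans (by linarith)
  have hu_div : u / a ≤ n ^ 2 := (div_le_self hu ha).trans (by linarith)
  have hγ : 1 ≤ 1 / γ := (one_le_div hγ0).mpr hγ1
  calc consensusPotential p γ n a b u
      = 24 / γ * (b / weightedBias p a b + n * (b / (weightedBias p a b * a))) + u / a := rfl
    _ ≤ 24 / γ * (n ^ 2 + n * n) + n ^ 2 := by gcongr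
    _ ≤ 24 / γ * (n ^ 2 + n * n) + 1 / γ * n ^ 2 := by
        gcongr
        exact le_mul_of_one_le_left (by positivity) hγ
    _ = 49 / γ * n ^ 2 := by ring

lemma exp_add_sub_exp_le {x s : ℝ} (hl0 : 0 ≤ l) (hl5 : l ≤ 1 / 5) (hs : |s| ≤ l + 2 * l ^ 2) :
    Real.exp (x + s) - Real.exp x ≤ Real.exp x * (s + 2 * l ^ 2) := by
  have hs75 : |s| ≤ 7 / 5 * l := hs.trans (by nlinarith)
  have hsq : s ^ 2 ≤ 2 * l ^ 2 := by
    calc s ^ 2 ≤ (7 / 5 * l) ^ 2 := sq_le_sq' (by linarith [neg_abs_le s]) (le_of_abs_le hs75)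
      _ ≤ 2 * l ^ 2 := by linarith [sq_nonneg l]
  have hexp := (abs_le.mp (Real.abs_exp_sub_one_sub_id_le (hs75.trans (by linarith)))).2
  calc Real.exp (x + s) - Real.exp x = Real.exp x * (Real.exp s - 1) := by
        rw [Real.exp_add]
        ring
    _ ≤ Real.exp x * (s + 2 * l ^ 2) := by
        gcongr
        linarith

lemma drift_escapePotential_nonpos (hp0 : 0 ≤ p) (hp1 : p ≤ 1) (hl0 : 0 ≤ l) (hl5 : l ≤ 1 / 5)
    (hc : IsRealConfig n a b u) (hd : 4 * l * n ≤ weightedBias p a b) :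
    drift p (escapePotential p l n) a b u ≤ 0 := by
  obtain ⟨ha, hb, hu, hsum⟩ := id hc
  set q := 1 - p with hq
  have : 0 ≤ q := by linarith
  have hql0 : 0 ≤ q * l := by positivity
  have hql : q * l ≤ l := mul_le_of_le_one_left hl0 (by linarith)
  have hl2 := sq_nonneg l
  set x := 2 * l ^ 2 * (n - u) - l * (weightedBias p a b - 4 * l * n) with hx
  have hincr {s : ℝ} (hs : |s| ≤ l + 2 * l ^ 2) := exp_add_sub_exp_le (x := x) hl0 hl5 hs
  have dec_fst := hincr (s := l - 2 * l ^ 2) (abs_le.mpr ⟨by linarith, by linarith⟩)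
  have dec_snd := hincr (s := -q * l - 2 * l ^ 2) (abs_le.mpr ⟨by linarith, by linarith⟩)
  have inc_fst := hincr (s := -l + 2 * l ^ 2) (abs_le.mpr ⟨by linarith, by linarith⟩)
  have inc_snd := hincr (s := q * l + 2 * l ^ 2) (abs_le.mpr ⟨by linarith, by linarith⟩)
  have hbias : 4 * l * (a + b) ≤ a - q * b := by
    refine le_trans ?_ hd
    gcongr
    linarith
  calc drift p (escapePotential p l n) a b u
      = q * a * b * (Real.exp (x + (l - 2 * l ^ 2)) - Real.exp x)
        + a * b * (Real.exp (x + (-q * l - 2 * l ^ 2)) - Real.exp x)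
        + u * a * (Real.exp (x + (-l + 2 * l ^ 2)) - Real.exp x)
        + u * b * (Real.exp (x + (q * l + 2 * l ^ 2)) - Real.exp x) := by
        simp only [drift, escapePotential, hx, hq, weightedBias]
        ring_nf
    _ ≤ q * a * b * (Real.exp x * (l - 2 * l ^ 2 + 2 * l ^ 2))
        + a * b * (Real.exp x * (-q * l - 2 * l ^ 2 + 2 * l ^ 2))
        + u * a * (Real.exp x * (-l + 2 * l ^ 2 + 2 * l ^ 2))
        + u * b * (Real.exp x * (q * l + 2 * l ^ 2 + 2 * l ^ 2)) := by gcongr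
    _ = Real.exp x * (l * u) * (4 * l * (a + b) - (a - q * b)) := by ring
    _ ≤ 0 := mul_nonpos_of_nonneg_of_nonpos (by positivity) (sub_nonpos.mpr hbias)

lemma one_le_escapePotential (hl : 0 ≤ l) (hu : u ≤ n) (hd : weightedBias p a b ≤ 4 * l * n) :
    1 ≤ escapePotential p l n a b u := by
  refine Real.one_le_exp ?_
  linarith [mul_nonneg hl (sub_nonneg.mpr hd), mul_nonneg (sq_nonneg l) (sub_nonneg.mpr hu)]

lemma escapePotential_le_inv (hl : 0 ≤ l) (hn : 0 < n) (hu : 0 ≤ u)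
    (hd : 7 * l * n ≤ weightedBias p a b) (hlog : Real.log n ≤ l ^ 2 * n) :
    escapePotential p l n a b u ≤ n⁻¹ := by
  rw [← Real.exp_log hn, ← Real.exp_neg, Real.exp_log hn]
  refine Real.exp_le_exp.mpr ?_
  linarith [mul_nonneg hl (sub_nonneg.mpr hd), mul_nonneg (sq_nonneg l) hu]

end Drift

/-- The configurations of `n` agents. -/
def configurations (n : ℕ) : Set (ℕ × ℕ × ℕ) := {c | c.1 + c.2.1 + c.2.2 = n}

/-- The possible successors of a configuration, the configuration itself included. The truncated
subtractions only affect transitions of probability zero. -/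
def usdSuccessors (c : ℕ × ℕ × ℕ) : Finset (ℕ × ℕ × ℕ) :=
  {(c.1 - 1, c.2.1, c.2.2 + 1), (c.1, c.2.1 - 1, c.2.2 + 1), (c.1 + 1, c.2.1, c.2.2 - 1),
    (c.1, c.2.1 + 1, c.2.2 - 1), c}

section Chain

variable {n : ℕ} {p : ℝ} {c d : ℕ × ℕ × ℕ}

lemma isRealConfig_natCast (hc : c ∈ configurations n) : IsRealConfig n c.1 c.2.1 c.2.2 where
  fst_nonneg := Nat.cast_nonneg _
  snd_nonneg := Nat.cast_nonneg _
  undecided_nonneg := Nat.cast_nonneg _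
  sum_eq := by exact_mod_cast hc

lemma usdStep_eq_zero_of_notMem_usdSuccessors (h : d ∉ usdSuccessors c) :
    usdStep n p c d = 0 := by
  simp only [usdSuccessors, Finset.mem_insert, Finset.mem_singleton, not_or] at h
  obtain ⟨h₁, h₂, h₃, h₄, h₅⟩ := h
  simp only [usdStep, if_neg h₁, if_neg h₂, if_neg h₃, if_neg h₄, if_neg h₅, add_zero]

lemma usdStep_eq_zero_of_notMem_configurations (hc : c ∈ configurations n)
    (hd : d ∉ configurations n) : usdStep n p c d = 0 := by
  obtain ⟨a, b, u⟩ := c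
  simp only [configurations, Set.mem_ofPred_eq] at hc hd
  have ite_zero {e : ℕ × ℕ × ℕ} {r : ℝ} (h : e.1 + e.2.1 + e.2.2 ≠ n → r = 0) :
      (if d = e then r else 0) = 0 :=
    ite_eq_right_iff.mpr fun hde => h (hde ▸ hd)
  simp only [usdStep]
  rw [ite_zero, ite_zero, ite_zero, ite_zero, ite_zero]
  · norm_num
  · exact fun h => absurd hc h
  all_goals
    intro h
    simp only at h
  · rw [show u = 0 by omega]
    simp
  · rw [show u = 0 by omega]
    simp
  · rw [show b = 0 by omega]
    simp
  · rw [show a = 0 by omega]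
    simp

lemma sum_usdStep_mul (hc : c ∈ configurations n) {f : ℕ × ℕ × ℕ → ℝ} {g : ℝ → ℝ → ℝ → ℝ}
    (hfg : ∀ d ∈ usdSuccessors c, d ∈ configurations n → f d = g d.1 d.2.1 d.2.2) :
    ∑ d ∈ usdSuccessors c, usdStep n p c d * f d =
      g c.1 c.2.1 c.2.2 + drift p g c.1 c.2.1 c.2.2 / (n : ℝ) ^ 2 := by
  obtain ⟨a, b, u⟩ := c
  simp only [configurations, Set.mem_ofPred_eq] at hc hfg
  have stay : f (a, b, u) = g a b u := hfg _ (by simp [usdSuccessors]) hc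
  have dec_fst : a * f (a - 1, b, u + 1) = a * g (a - 1) b (u + 1) := by
    rcases a with _ | a
    · simp
    · rw [hfg _ (by simp [usdSuccessors]) (by simp only; omega)]
      simp
  have dec_snd : b * f (a, b - 1, u + 1) = b * g a (b - 1) (u + 1) := by
    rcases b with _ | b
    · simp
    · rw [hfg _ (by simp [usdSuccessors]) (by simp only; omega)]
      simp
  have inc_fst : u * f (a + 1, b, u - 1) = u * g (a + 1) b (u - 1) := by
    rcases u with _ | u
    · simp
    · rw [hfg _ (by simp [usdSuccessors]) (by simp only; omega)]
      simp
  have inc_snd : u * f (a, b + 1, u - 1) = u * g a (b + 1) (u - 1) := by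
    rcases u with _ | u
    · simp
    · rw [hfg _ (by simp [usdSuccessors]) (by simp only; omega)]
      simp
  calc ∑ d ∈ usdSuccessors (a, b, u), usdStep n p (a, b, u) d * f d
      = (1 - p) * b / (n : ℝ) ^ 2 * (a * f (a - 1, b, u + 1))
        + a / (n : ℝ) ^ 2 * (b * f (a, b - 1, u + 1))
        + a / (n : ℝ) ^ 2 * (u * f (a + 1, b, u - 1))
        + b / (n : ℝ) ^ 2 * (u * f (a, b + 1, u - 1))
        + (1 - ((2 - p) * a * b + u * (a + b)) / (n : ℝ) ^ 2) * f (a, b, u) := by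
        simp only [usdStep, add_mul, ite_mul, zero_mul, Finset.sum_add_distrib,
          Finset.sum_ite_eq']
        simp only [usdSuccessors, Finset.mem_insert, Finset.mem_singleton, true_or, or_true,
          if_true]
        ring
    _ = g a b u + drift p g a b u / (n : ℝ) ^ 2 := by
        rw [dec_fst, dec_snd, inc_fst, inc_snd, stay, drift]
        ring

lemma weightedBias_sub_one_le (hp0 : 0 ≤ p) (hp1 : p ≤ 1) (hd : d ∈ usdSuccessors c) :
    weightedBias p c.1 c.2.1 - 1 ≤ weightedBias p d.1 d.2.1 := by
  have hq : 0 ≤ 1 - p := by linarith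
  have hmove : (c.1 ≤ d.1 + 1 ∧ d.2.1 ≤ c.2.1) ∨ (c.1 ≤ d.1 ∧ d.2.1 ≤ c.2.1 + 1) := by
    simp only [usdSuccessors, Finset.mem_insert, Finset.mem_singleton] at hd
    rcases hd with rfl | rfl | rfl | rfl | rfl <;> grind
  unfold weightedBias
  rcases hmove with ⟨hfst, hsnd⟩ | ⟨hfst, hsnd⟩
  · have hfst' : (c.1 : ℝ) ≤ d.1 + 1 := by exact_mod_cast hfst
    have hsnd' : (d.2.1 : ℝ) ≤ c.2.1 := by exact_mod_cast hsnd
    linarith [mul_le_mul_of_nonneg_left hsnd' hq]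
  · have hfst' : (c.1 : ℝ) ≤ d.1 := by exact_mod_cast hfst
    have hsnd' : (d.2.1 : ℝ) ≤ c.2.1 + 1 := by exact_mod_cast hsnd
    linarith [mul_le_mul_of_nonneg_left hsnd' hq]

end Chain

/-- The conditions under which the weighted bias stays above `4 l n` for a long time and the
Lyapunov function `consensusPotential p γ n` contracts while it does. -/
structure IsAdmissible (p γ l : ℝ) (n : ℕ) : Prop where
  p_pos : 0 < p
  p_le_one : p ≤ 1
  γ_pos : 0 < γ
  γ_le_one : γ ≤ 1
  rate_nonneg : 0 ≤ l
  rate_le : l ≤ 1 / 5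
  log_le : Real.log n ≤ l ^ 2 * n
  scale_le : 16 / γ + 8 / p ≤ 4 * l * √n
  contraction : ∀ a b u : ℝ, IsRealConfig n a b u → 4 * l * n ≤ weightedBias p a b →
    γ * (n : ℝ) ^ 2 ≤ a ^ 2 + n * weightedBias p a b + n * u

/-- A bound on the probability that consensus on Opinion 1 is not reached from `c` within `k` steps:
either the weighted bias escapes below its threshold, or the Lyapunov function is still large.
The truncation at `0` makes it meaningful where the weighted bias is not positive. -/
noncomputable def failureBound (p γ l : ℝ) (n k : ℕ) (c : ℕ × ℕ × ℕ) : ℝ :=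
  escapePotential p l n c.1 c.2.1 c.2.2 +
    (1 - contractionRate p γ / n) ^ k * max (n * consensusPotential p γ n c.1 c.2.1 c.2.2) 0

/-- The factor in the time bound and in the error probability. -/
noncomputable def consensusConstant (p γ : ℝ) : ℝ := 1 + 147 / γ + 4 / contractionRate p γ

/-- Under the path law `μ`, Opinion 1 wins within `C n log n` steps with probability at least
`1 - C / n`. -/
def ReachesConsensus (C : ℝ) (n : ℕ) (μ : Measure (ℕ → ℕ × ℕ × ℕ)) : Prop :=
  1 - C * (n : ℝ)⁻¹ ≤ μ.real {ω | ∃ t : ℕ, (t : ℝ) ≤ C * n * Real.log n ∧ (ω t).1 = n}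

section Admissible

variable {p γ l C : ℝ} {n k : ℕ} {c x₀ : ℕ × ℕ × ℕ} {μ : Measure (ℕ → ℕ × ℕ × ℕ)}

lemma IsAdmissible.pos (h : IsAdmissible p γ l n) : 0 < n := by
  have hγ := h.γ_pos
  have hp := h.p_pos
  by_contra! hn
  have hscale := h.scale_le
  rw [Nat.le_zero.mp hn, Nat.cast_zero, Real.sqrt_zero, mul_zero] at hscale
  exact hscale.not_gt (by positivity)

lemma IsAdmissible.mul_sqrt_le (h : IsAdmissible p γ l n) :
    (16 / γ + 8 / p) * √n ≤ 4 * l * n := by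
  calc (16 / γ + 8 / p) * √n ≤ 4 * l * √n * √n :=
        mul_le_mul_of_nonneg_right h.scale_le (Real.sqrt_nonneg _)
    _ = 4 * l * n := by rw [mul_assoc, Real.mul_self_sqrt n.cast_nonneg]

lemma IsAdmissible.one_le_threshold (h : IsAdmissible p γ l n) : 1 ≤ 4 * l * n := by
  have hp := h.p_pos
  have hn : (1 : ℝ) ≤ n := by exact_mod_cast h.pos
  have hγ := one_le_div_mul_sqrt h.γ_pos h.γ_le_one (r := 16) (by norm_num) hn
  have hscale := h.mul_sqrt_le
  have : 0 ≤ 8 / p * √n := by positivity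
  linarith

lemma contractionRate_pos (hp : 0 < p) (hγ : 0 < γ) : 0 < contractionRate p γ :=
  lt_min (by positivity) (by positivity)

lemma contractionRate_le_one (hγ : γ ≤ 1) : contractionRate p γ ≤ 1 :=
  (min_le_left _ _).trans (by linarith)

lemma IsAdmissible.one_sub_contractionRate_div_nonneg (h : IsAdmissible p γ l n) :
    0 ≤ 1 - contractionRate p γ / n := by
  have hn : (1 : ℝ) ≤ n := by exact_mod_cast h.pos
  exact sub_nonneg.mpr (div_le_one_of_le₀ ((contractionRate_le_one h.γ_le_one).trans hn)
    (by linarith))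

lemma failureBound_eq (hγ : 0 < γ) (hc : c ∈ configurations n)
    (hd : 0 ≤ weightedBias p c.1 c.2.1) :
    failureBound p γ l n k c = (escapePotential p l n +
      ((1 - contractionRate p γ / n) ^ k * n) • consensusPotential p γ n) c.1 c.2.1 c.2.2 := by
  have hΛ := consensusPotential_nonneg hγ (isRealConfig_natCast hc) hd
  rw [failureBound, max_eq_left (by positivity)]
  simp only [Pi.add_apply, Pi.smul_apply, smul_eq_mul, mul_assoc]

lemma IsAdmissible.one_le_failureBound_zero (h : IsAdmissible p γ l n) (hc : c ∈ configurations n)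
    (hne : c.1 ≠ n) (hd : 4 * l * n ≤ weightedBias p c.1 c.2.1) :
    1 ≤ failureBound p γ l n 0 c := by
  have hbu : (1 : ℝ) ≤ c.2.1 ∨ (1 : ℝ) ≤ c.2.2 := by
    have hsum : c.1 + c.2.1 + c.2.2 = n := hc
    norm_cast
    omega
  have hone := one_le_mul_consensusPotential h.p_le_one h.γ_pos h.γ_le_one
    (isRealConfig_natCast hc) (by linarith [h.one_le_threshold]) hbu
  rw [failureBound, pow_zero, one_mul]
  exact (hone.trans (le_max_left _ _)).trans (le_add_of_nonneg_left (Real.exp_pos _).le)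

lemma IsAdmissible.one_le_failureBound (h : IsAdmissible p γ l n) (hc : c ∈ configurations n)
    (hd : weightedBias p c.1 c.2.1 ≤ 4 * l * n) : 1 ≤ failureBound p γ l n k c := by
  have hreal := isRealConfig_natCast hc
  have hu : (c.2.2 : ℝ) ≤ n := by
    linarith [hreal.fst_nonneg, hreal.snd_nonneg, hreal.sum_eq]
  have hρ := h.one_sub_contractionRate_div_nonneg
  exact (one_le_escapePotential h.rate_nonneg hu hd).trans
    (le_add_of_nonneg_right (by positivity))

lemma IsAdmissible.sum_usdStep_mul_failureBound_le (h : IsAdmissible p γ l n)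
    (hc : c ∈ configurations n) (hd : 4 * l * n ≤ weightedBias p c.1 c.2.1) :
    ∑ d ∈ usdSuccessors c, usdStep n p c d * failureBound p γ l n k d ≤
      failureBound p γ l n (k + 1) c := by
  have hreal := isRealConfig_natCast hc
  have hn : (1 : ℝ) ≤ n := by exact_mod_cast h.pos
  have hthreshold := h.one_le_threshold
  have hescape := drift_escapePotential_nonpos h.p_pos.le h.p_le_one h.rate_nonneg h.rate_le
    hreal hd
  have hcontract := drift_consensusPotential_le h.p_pos h.p_le_one h.γ_pos h.γ_le_one hn hreal
    (h.mul_sqrt_le.trans hd) (h.contraction _ _ _ hreal hd)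
  have hρ := h.one_sub_contractionRate_div_nonneg
  rw [sum_usdStep_mul hc fun d hsucc hmem => failureBound_eq h.γ_pos hmem
      (by linarith [weightedBias_sub_one_le h.p_pos.le h.p_le_one hsucc]),
    failureBound_eq h.γ_pos hc (by linarith), drift_add, drift_smul]
  simp only [Pi.add_apply, Pi.smul_apply, smul_eq_mul]
  set m := contractionRate p γ
  set Λ := consensusPotential p γ n c.1 c.2.1 c.2.2
  set E := escapePotential p l n c.1 c.2.1 c.2.2
  set r := (1 - m / n) ^ k with hr
  have : 0 ≤ r := by positivity
  calc E + r * n * Λ + (drift p (escapePotential p l n) c.1 c.2.1 c.2.2 +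
        r * n * drift p (consensusPotential p γ n) c.1 c.2.1 c.2.2) / (n : ℝ) ^ 2
      ≤ E + r * n * Λ + (0 + r * n * (-m * n * Λ)) / (n : ℝ) ^ 2 := by gcongr
    _ = E + (1 - m / n) ^ (k + 1) * n * Λ := by
        have hn0 : (n : ℝ) ≠ 0 := by positivity
        rw [pow_succ (1 - m / (n : ℝ)), ← hr]
        field_simp
        ring

lemma IsAdmissible.isSupersolution_failureBound (h : IsAdmissible p γ l n) :
    IsSupersolution (usdStep n p) usdSuccessors (configurations n) {c | c.1 = n}
      (failureBound p γ l n) where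
  nonneg k c _ _ := by
    have hρ := h.one_sub_contractionRate_div_nonneg
    exact add_nonneg (Real.exp_pos _).le (by positivity)
  one_le_zero c hc hne := by
    rcases le_total (weightedBias p c.1 c.2.1) (4 * l * n) with hd | hd
    · exact h.one_le_failureBound hc hd
    · exact h.one_le_failureBound_zero hc hne hd
  step k c hc _ := (le_total (weightedBias p c.1 c.2.1) (4 * l * n)).imp
    (h.one_le_failureBound hc) (h.sum_usdStep_mul_failureBound_le hc)

lemma one_sub_div_pow_floor_le {m x : ℝ} {K : ℕ} (hx : 1 ≤ x) (hm0 : 0 ≤ m) (hm1 : m ≤ 1)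
    (hK : K ≤ m * C) : (1 - m / x) ^ ⌊C * x * Real.log x⌋₊ ≤ 3 / x ^ K := by
  have hx0 : 0 < x := by linarith
  have hmx : m / x ≤ 1 := (div_le_one hx0).mpr (hm1.trans hx)
  have hlog : 0 ≤ Real.log x := Real.log_nonneg hx
  set T := ⌊C * x * Real.log x⌋₊
  have hT : C * x * Real.log x - 1 ≤ T := by linarith [Nat.lt_floor_add_one (C * x * Real.log x)]
  have hexponent : K * Real.log x - 1 ≤ T * (m / x) :=
    calc K * Real.log x - 1 ≤ m * C * Real.log x - m / x := by gcongr
      _ = (C * x * Real.log x - 1) * (m / x) := by field_simp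
      _ ≤ T * (m / x) := by gcongr
  calc (1 - m / x) ^ T ≤ Real.exp (-(m / x)) ^ T :=
        pow_le_pow_left₀ (sub_nonneg.mpr hmx) (Real.one_sub_le_exp_neg _) T
    _ = Real.exp (-(T * (m / x))) := by rw [← Real.exp_nat_mul, mul_neg]
    _ ≤ Real.exp (1 - K * Real.log x) := Real.exp_le_exp.mpr (by linarith)
    _ = Real.exp 1 / x ^ K := by rw [Real.exp_sub, Real.exp_nat_mul, Real.exp_log hx0]
    _ ≤ 3 / x ^ K := by
        gcongr
        exact Real.exp_one_lt_three.le

lemma IsAdmissible.failureBound_le (h : IsAdmissible p γ l n) (hc : c ∈ configurations n)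
    (hd : 7 * l * n ≤ weightedBias p c.1 c.2.1) :
    failureBound p γ l n ⌊consensusConstant p γ * n * Real.log n⌋₊ c ≤
      consensusConstant p γ * (n : ℝ)⁻¹ := by
  have hreal := isRealConfig_natCast hc
  have hn : (1 : ℝ) ≤ n := by exact_mod_cast h.pos
  have hγ := h.γ_pos
  have hm := contractionRate_pos h.p_pos hγ
  have hbias : 1 ≤ weightedBias p c.1 c.2.1 := by
    have : 0 ≤ l * n := mul_nonneg h.rate_nonneg n.cast_nonneg
    linarith [h.one_le_threshold]
  have hC : (4 : ℕ) ≤ contractionRate p γ * consensusConstant p γ := by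
    rw [consensusConstant, mul_add, mul_div_cancel₀ _ hm.ne']
    exact le_add_of_nonneg_left (by positivity)
  have hdecay := one_sub_div_pow_floor_le hn hm.le (contractionRate_le_one h.γ_le_one) hC
  have hescape := escapePotential_le_inv h.rate_nonneg (by linarith) hreal.undecided_nonneg hd
    h.log_le
  have hΛ := consensusPotential_le h.p_le_one hγ h.γ_le_one hreal hbias
  have hΛ0 := consensusPotential_nonneg hγ hreal (by linarith)
  rw [failureBound, max_eq_left (by positivity)]
  calc escapePotential p l n c.1 c.2.1 c.2.2 +
        (1 - contractionRate p γ / n) ^ ⌊consensusConstant p γ * n * Real.log n⌋₊ *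
          (n * consensusPotential p γ n c.1 c.2.1 c.2.2)
      ≤ (n : ℝ)⁻¹ + 3 / (n : ℝ) ^ 4 * (n * (49 / γ * (n : ℝ) ^ 2)) := by gcongr
    _ = (1 + 147 / γ) * (n : ℝ)⁻¹ := by
        field_simp
        norm_num
    _ ≤ consensusConstant p γ * (n : ℝ)⁻¹ := by
        gcongr
        exact le_add_of_nonneg_right (by positivity)

theorem IsAdmissible.reachesConsensus (h : IsAdmissible p γ l n) (hx₀ : x₀ ∈ configurations n)
    (hbias : 7 * l * n ≤ dw p x₀) (hμ : IsUSD n p x₀ μ) :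
    ReachesConsensus (consensusConstant p γ) n μ := by
  have := hμ.1
  have hm := contractionRate_pos h.p_pos h.γ_pos
  have hγ := h.γ_pos
  have hC : 0 ≤ consensusConstant p γ := by
    unfold consensusConstant
    positivity
  have : 0 ≤ Real.log n := Real.log_natCast_nonneg n
  refine (sub_le_sub_left (h.failureBound_le hx₀ hbias) 1).trans
    ((h.isSupersolution_failureBound.one_sub_le_measureReal_hits hμ
      (fun _ _ => usdStep_eq_zero_of_notMem_usdSuccessors)
      (fun _ hc _ => usdStep_eq_zero_of_notMem_configurations hc) hx₀ _).trans ?_)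
  exact measureReal_mono fun ω ⟨t, ht, hhit⟩ =>
    ⟨t, (Nat.cast_le.mpr ht).trans (Nat.floor_le (by positivity)), hhit⟩

lemma ReachesConsensus.mono [IsFiniteMeasure μ] {C' : ℝ} (h : ReachesConsensus C n μ)
    (hCC' : C ≤ C') : ReachesConsensus C' n μ := by
  have : 0 ≤ Real.log n := Real.log_natCast_nonneg n
  refine (sub_le_sub_left (by gcongr) 1).trans (h.trans (measureReal_mono ?_))
  exact fun ω ⟨t, ht, hhit⟩ => ⟨t, ht.trans (by gcongr), hhit⟩

lemma reachesConsensus_of_le (hn : 0 < n) (hC : n ≤ C) : ReachesConsensus C n μ := by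
  have hone : 1 ≤ C * (n : ℝ)⁻¹ := by
    rwa [← div_eq_mul_inv, one_le_div (by exact_mod_cast hn)]
  exact (sub_nonpos.mpr hone).trans measureReal_nonneg

theorem exists_reachesConsensus (hp : 0 < p) (hγ : 0 < γ) {θ : ℕ → ℝ}
    (hθ : ∀ᶠ n in atTop, ∃ l, IsAdmissible p γ l n ∧ 7 * l * n ≤ θ n) :
    ∃ C, 0 < C ∧ ∀ n, 0 < n → ∀ x₀ ∈ configurations n, θ n ≤ dw p x₀ →
      ∀ μ, IsUSD n p x₀ μ → ReachesConsensus C n μ := by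
  obtain ⟨N, hN⟩ := eventually_atTop.mp hθ
  have hm := contractionRate_pos hp hγ
  have hC : 0 < consensusConstant p γ := by
    unfold consensusConstant
    positivity
  refine ⟨consensusConstant p γ + N, by positivity, fun n hn x₀ hx₀ hbias μ hμ => ?_⟩
  have := hμ.1
  rcases lt_or_ge n N with hlt | hge
  · have hnN : (n : ℝ) ≤ N := by exact_mod_cast hlt.le
    exact reachesConsensus_of_le hn (hnN.trans (le_add_of_nonneg_left hC.le))
  · obtain ⟨l, hadm, hl⟩ := hN n hge
    exact (hadm.reachesConsensus hx₀ (hl.trans hbias) hμ).mono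
      (le_add_of_nonneg_right N.cast_nonneg)

end Admissible

section Threshold

variable {ε p n a b u : ℝ}

lemma IsRealConfig.contraction_of_lt_one (hp0 : 0 ≤ p) (hp1 : p ≤ 1) (hc : IsRealConfig n a b u)
    (hd : 0 ≤ weightedBias p a b) :
    ((1 - p) / 4) ^ 2 * n ^ 2 ≤ a ^ 2 + n * weightedBias p a b + n * u := by
  obtain ⟨ha, hb, hu, hsum⟩ := hc
  have hn : 0 ≤ n := by linarith
  have hnd : 0 ≤ n * weightedBias p a b := mul_nonneg hn hd
  have : 0 ≤ 1 - p := by linarith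
  rw [← mul_pow]
  rcases le_total (n / 2) u with hlarge | hsmall
  · have hnu : n * (n / 2) ≤ n * u := by gcongr
    have : ((1 - p) / 4 * n) ^ 2 ≤ (1 / 4 * n) ^ 2 := by
      gcongr
      linarith
    linarith [sq_nonneg a, sq_nonneg n]
  · have hqab : (1 - p) * (n / 2) ≤ (1 - p) * (a + b) := by
      gcongr
      linarith
    have : 0 ≤ p * a := mul_nonneg hp0 ha
    unfold weightedBias at hd
    have : ((1 - p) / 4 * n) ^ 2 ≤ a ^ 2 := by
      gcongr
      linarith
    linarith [mul_nonneg hn hu]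

lemma sqrt_div_mul_self (hn : 0 < n) : √(a / n) * n = √(n * a) := by
  rw [show n * a = a / n * n ^ 2 by field_simp, Real.sqrt_mul' _ (sq_nonneg n), Real.sqrt_sq hn.le]

lemma tendsto_log_natCast_div_atTop :
    Tendsto (fun n : ℕ => Real.log n / n) atTop (𝓝 0) :=
  Real.isLittleO_log_id_atTop.tendsto_div_nhds_zero.comp tendsto_natCast_atTop_atTop

lemma eventually_isAdmissible_of_lt_one (hp0 : 0 < p) (hp1 : p < 1) :
    ∀ᶠ n : ℕ in atTop, IsAdmissible p (((1 - p) / 4) ^ 2) √(Real.log n / n) n := by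
  have : 0 < 1 - p := by linarith
  have hscale : Tendsto (fun n : ℕ => √(Real.log n)) atTop atTop :=
    Real.tendsto_sqrt_atTop.comp (Real.tendsto_log_atTop.comp tendsto_natCast_atTop_atTop)
  filter_upwards [eventually_gt_atTop 0,
    tendsto_log_natCast_div_atTop.eventually_le_const (u := (1 / 5) ^ 2) (by norm_num),
    hscale.eventually_ge_atTop (16 / ((1 - p) / 4) ^ 2 + 8 / p)] with n hn hratio hL
  have hn0 : (0 : ℝ) < n := by exact_mod_cast hn
  have : 0 ≤ Real.log n := Real.log_natCast_nonneg n
  have hsqrt : √(Real.log n / n) * √n = √(Real.log n) := by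
    rw [← Real.sqrt_mul (by positivity), div_mul_cancel₀ _ hn0.ne']
  exact
    { p_pos := hp0
      p_le_one := hp1.le
      γ_pos := by positivity
      γ_le_one := pow_le_one₀ (by positivity) (by linarith)
      rate_nonneg := Real.sqrt_nonneg _
      rate_le := Real.sqrt_le_iff.mpr ⟨by norm_num, hratio⟩
      log_le := by rw [Real.sq_sqrt (by positivity), div_mul_cancel₀ _ hn0.ne']
      scale_le := by
        rw [mul_assoc, hsqrt]
        linarith [Real.sqrt_nonneg (Real.log n)]
      contraction := fun a b u hc hd =>
        hc.contraction_of_lt_one hp0.le hp1.le (le_trans (by positivity) hd) }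

lemma eventually_isAdmissible_one (hε0 : 0 < ε) (hε1 : ε ≤ 1) :
    ∀ᶠ n : ℕ in atTop, IsAdmissible 1 (ε / 2) (ε / 8) n := by
  have hscale : Tendsto (fun n : ℕ => 4 * (ε / 8) * √(n : ℝ)) atTop atTop :=
    (Real.tendsto_sqrt_atTop.comp tendsto_natCast_atTop_atTop).const_mul_atTop (by positivity)
  filter_upwards [eventually_gt_atTop 0,
    tendsto_log_natCast_div_atTop.eventually_le_const (u := (ε / 8) ^ 2) (by positivity),
    hscale.eventually_ge_atTop (16 / (ε / 2) + 8 / 1)] with n hn hratio hL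
  have hn0 : (0 : ℝ) < n := by exact_mod_cast hn
  refine
    { p_pos := one_pos
      p_le_one := le_rfl
      γ_pos := by positivity
      γ_le_one := by linarith
      rate_nonneg := by positivity
      rate_le := by linarith
      log_le := (div_le_iff₀ hn0).mp hratio
      scale_le := hL
      contraction := fun a b u hc hd => ?_ }
  calc ε / 2 * (n : ℝ) ^ 2 = n * (4 * (ε / 8) * n) := by ring
    _ ≤ n * weightedBias 1 a b := by gcongr
    _ ≤ a ^ 2 + n * weightedBias 1 a b + n * u := by
        linarith [sq_nonneg a, mul_nonneg hn0.le hc.undecided_nonneg]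

lemma sqrt_mul_log_le_dw {n : ℕ} {x₀ : ℕ × ℕ × ℕ} (hn : 0 < n) (hx₀ : x₀ ∈ configurations n)
    (hle : x₀.1 ≤ x₀.2.1) (hu : (x₀.2.2 : ℝ) ≤ n / 2)
    (hbias : 28 * √(Real.log n / n) ≤ p - (1 - (x₀.1 : ℝ) / x₀.2.1)) :
    7 * √(n * Real.log n) ≤ dw p x₀ := by
  have hn0 : (0 : ℝ) < n := by exact_mod_cast hn
  have hle' : (x₀.1 : ℝ) ≤ x₀.2.1 := by exact_mod_cast hle
  have hquarter : (n : ℝ) / 4 ≤ x₀.2.1 := by linarith [(isRealConfig_natCast hx₀).sum_eq]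
  have hsnd : (x₀.2.1 : ℝ) ≠ 0 := by linarith
  calc 7 * √(n * Real.log n) = 28 * √(Real.log n / n) * (n / 4) := by
        rw [← sqrt_div_mul_self hn0]
        ring
    _ ≤ 28 * √(Real.log n / n) * x₀.2.1 := by gcongr
    _ ≤ (p - (1 - (x₀.1 : ℝ) / x₀.2.1)) * x₀.2.1 := by gcongr
    _ = dw p x₀ := by
        unfold dw
        field_simp
        ring

end Threshold

theorem stmt_0_general {ε p : ℝ} (hε : ε ∈ Set.Ioc (0 : ℝ) 1) (hp : p ∈ Set.Ioc (0 : ℝ) 1) :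
    ∃ C, 0 < C ∧ ∀ n, 0 < n → ∀ x₀ ∈ configurations n, 7 * √(n * Real.log n) ≤ dw p x₀ →
      (p = 1 → ε * n ≤ x₀.1) → ∀ μ, IsUSD n p x₀ μ → ReachesConsensus C n μ := by
  rcases hp.2.lt_or_eq with hlt | rfl
  · have hq : 0 < 1 - p := by linarith
    obtain ⟨C, hC, hconsensus⟩ := exists_reachesConsensus hp.1 (pow_pos (div_pos hq four_pos) 2)
      (θ := fun n => 7 * √(n * Real.log n)) (by
        filter_upwards [eventually_isAdmissible_of_lt_one hp.1 hlt] with n hadm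
        have hn : (0 : ℝ) < n := by exact_mod_cast hadm.pos
        exact ⟨_, hadm, by rw [mul_assoc, sqrt_div_mul_self hn]⟩)
    exact ⟨C, hC, fun n hn x₀ hx₀ hbias _ => hconsensus n hn x₀ hx₀ hbias⟩
  · obtain ⟨C, hC, hconsensus⟩ := exists_reachesConsensus one_pos (half_pos hε.1)
      (θ := fun n => ε * n) (by
        filter_upwards [eventually_isAdmissible_one hε.1 hε.2] with n hadm
        exact ⟨_, hadm, by linarith [mul_nonneg hε.1.le n.cast_nonneg]⟩)
    refine ⟨C, hC, fun n hn x₀ hx₀ _ hfst => hconsensus n hn x₀ hx₀ ?_⟩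
    rw [dw, sub_self, zero_mul, sub_zero]
    exact hfst rfl

/-- For constants `ε, p ∈ (0,1]`, there are constants `c, C > 0`
(depending only on `ε` and `p`) such that for any configuration `x0 = (x₁, x₂, u)` with
`x₁ ∈ [ε·n, x₂]`, `u ≤ n/2` and `p - p_s ≥ c·√(log n / n)` where `p_s = 1 - x₁/x₂`,
the chain `USD_p` started from `x0` reaches `X₁ = n` within `C·n·log n` steps with
probability at least `1 - C·n⁻¹`. -/
theorem stmt_0 (ε p : ℝ) (hε : ε ∈ Set.Ioc (0 : ℝ) 1) (hp : p ∈ Set.Ioc (0 : ℝ) 1) :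
    ∃ c C : ℝ, 0 < c ∧ 0 < C ∧
      ∀ (n : ℕ), 2 ≤ n →
      ∀ x0 : ℕ × ℕ × ℕ, x0.1 + x0.2.1 + x0.2.2 = n →
        ε * (n : ℝ) ≤ (x0.1 : ℝ) → x0.1 ≤ x0.2.1 → (x0.2.2 : ℝ) ≤ (n : ℝ) / 2 →
        c * Real.sqrt (Real.log n / n) ≤ p - (1 - (x0.1 : ℝ) / (x0.2.1 : ℝ)) →
        ∀ μ : Measure (ℕ → ℕ × ℕ × ℕ), IsUSD n p x0 μ →
          1 - C * (n : ℝ)⁻¹ ≤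
            (μ {ω | ∃ t : ℕ, (t : ℝ) ≤ C * n * Real.log n ∧ (ω t).1 = n}).toReal := by
  obtain ⟨C, hC, hconsensus⟩ := stmt_0_general hε hp
  exact ⟨28, C, by norm_num, hC, fun n hn x₀ hx₀ hfst hle hu hbias => hconsensus n (by omega) x₀ hx₀
    (sqrt_mul_log_le_dw (by omega) hx₀ hle hu hbias) fun _ => hfst⟩
end

section
/- Let p ∈ [0,1], let ξ ≥ 1 be a constant, and define Φ_up(t) = U(t) − X₁(t) − X₂(t). Let the chain USD_p be started from a configuration with Φ_up(0) < 2ξ·√(n·log n). Then for every constant α > 0, with probability at least 1 − α·n^{-3}·log² n it holds that Φ_up(t) ≤ 6ξ·√(n·log n) for all t ≤ α·n·log² n. -/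
open MeasureTheory

/-!
A step towards undecided states multiplies the potential `2 ^ (Φ_up / 2)` by `2` and a step away
from them halves it, so with `s = x₁ + x₂` its drift, relative to its current value, is
`((2 - p) x₁ x₂ - u s / 2) / n²`. By `x₁ x₂ ≤ s² / 4` this is nonpositive as soon as `s ≤ u`, while
for `s ≥ u` the potential is at most `1` and at most doubles. Hence the expected potential grows by
at most `1` per step. Markov's inequality at each of the at most `n⁴` relevant times then bounds the
probability of `Φ_up ≥ 6ξ√(n log n)` by `2 · 2 ^ (-2ξ√(n log n)) ≤ n⁻⁴`, the last step being
valid unless `n ≤ 6√(n log n)`, when the threshold exceeds the trivial bound `Φ_up ≤ n`.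
-/

section MarkovLaw

open scoped ENNReal

variable {S : Type*} [MeasurableSpace S]

open Classical in
/-- `μ` is the law on path space of the Markov chain with one-step transition probabilities `P`
started from `x₀`, specified by its cylinder probabilities. The rows of `P` are not required to be
probability vectors, so that `P` may be arbitrary on states the chain cannot reach. -/
structure IsMarkovLaw_s13 (P : S → S → ℝ) (x₀ : S) (μ : Measure (ℕ → S)) : Prop where
  isProbabilityMeasure : IsProbabilityMeasure μ
  measureReal_cylinder (t : ℕ) (seq : ℕ → S) :
    μ.real {ω | ∀ i ≤ t, ω i = seq i} =
      (if seq 0 = x₀ then 1 else 0) * ∏ i ∈ Finset.range t, P (seq i) (seq (i + 1))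

lemma measure_eq_tsum_inter_fiber {Ω β : Type*} [MeasurableSpace Ω] [MeasurableSpace β]
    [Countable β] [MeasurableSingletonClass β] (μ : Measure Ω) {f : Ω → β} (hf : Measurable f)
    (s : Set Ω) : μ s = ∑' y, μ (f ⁻¹' {y} ∩ s) := by
  have hfiber (y : β) : MeasurableSet (f ⁻¹' {y}) := hf (measurableSet_singleton y)
  have hdisj : Pairwise (Function.onFun Disjoint fun y ↦ f ⁻¹' {y}) :=
    fun _ _ hne ↦ (Set.disjoint_singleton.2 hne).preimage f
  calc μ s = μ.restrict s (⋃ y, f ⁻¹' {y}) := by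
        rw [← Set.preimage_iUnion, Set.iUnion_of_singleton, Set.preimage_univ,
          Measure.restrict_apply_univ]
    _ = ∑' y, μ (f ⁻¹' {y} ∩ s) := by
        rw [measure_iUnion hdisj hfiber]
        simp only [Measure.restrict_apply (hfiber _)]

namespace IsMarkovLaw_s13

variable {P : S → S → ℝ} {x₀ : S} {μ : Measure (ℕ → S)}

lemma measure_cylinder_inter_succ (hμ : IsMarkovLaw_s13 P x₀ μ) (t : ℕ) (seq : ℕ → S) (d : S) :
    μ ({ω | ∀ i ≤ t, ω i = seq i} ∩ {ω | ω (t + 1) = d}) =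
      μ {ω | ∀ i ≤ t, ω i = seq i} * ENNReal.ofReal (P (seq t) d) := by
  have := hμ.isProbabilityMeasure
  let seq' := Function.update seq (t + 1) d
  have hseq' (i : ℕ) (hi : i ≤ t) : seq' i = seq i := Function.update_of_ne (by lia) ..
  have hlast : seq' (t + 1) = d := Function.update_self ..
  have hset : {ω : ℕ → S | ∀ i ≤ t, ω i = seq i} ∩ {ω | ω (t + 1) = d} =
      {ω | ∀ i ≤ t + 1, ω i = seq' i} := by
    ext ω
    simp +contextual [Nat.le_succ_iff, or_imp, forall_and, hseq', hlast]
  have hprod : ∏ i ∈ Finset.range t, P (seq' i) (seq' (i + 1)) =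
      ∏ i ∈ Finset.range t, P (seq i) (seq (i + 1)) :=
    Finset.prod_congr rfl fun i hi ↦ by
      rw [hseq' i (Finset.mem_range.1 hi).le, hseq' (i + 1) (Finset.mem_range.1 hi)]
  have hreal : μ.real {ω | ∀ i ≤ t + 1, ω i = seq' i} =
      μ.real {ω | ∀ i ≤ t, ω i = seq i} * P (seq t) d := by
    rw [hμ.measureReal_cylinder, hμ.measureReal_cylinder, Finset.prod_range_succ, hprod,
      hseq' 0 t.zero_le, hseq' t le_rfl, hlast, mul_assoc]
  rw [hset, ← ofReal_measureReal, hreal, ENNReal.ofReal_mul measureReal_nonneg, ofReal_measureReal]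

lemma ae_zero_eq [MeasurableSingletonClass S] (hμ : IsMarkovLaw_s13 P x₀ μ) : ∀ᵐ ω ∂μ, ω 0 = x₀ := by
  have := hμ.isProbabilityMeasure
  have hmeas : MeasurableSet {ω : ℕ → S | ω 0 = x₀} :=
    (measurableSet_singleton x₀).preimage (measurable_pi_apply 0)
  have hcyl : μ.real {ω | ω 0 = x₀} = 1 := by simpa using hμ.measureReal_cylinder 0 fun _ ↦ x₀
  rw [ae_iff_prob_eq_one (measurableSet_setOfPred.1 hmeas), ← ofReal_measureReal, hcyl,
    ENNReal.ofReal_one]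

variable [Countable S] [MeasurableSingletonClass S]

lemma measure_eq_and_succ_eq (hμ : IsMarkovLaw_s13 P x₀ μ) (t : ℕ) (c d : S) :
    μ {ω | ω t = c ∧ ω (t + 1) = d} = μ {ω | ω t = c} * ENNReal.ofReal (P c d) := by
  let past (ω : ℕ → S) (i : Fin t) : S := ω i
  let path (h : Fin t → S) (i : ℕ) : S := if hi : i < t then h ⟨i, hi⟩ else c
  have hpast : Measurable past := measurable_pi_lambda _ fun i ↦ measurable_pi_apply _
  have hpath (h : Fin t → S) : path h t = c := dif_neg (lt_irrefl t)
  have hfiber (h : Fin t → S) :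
      past ⁻¹' {h} ∩ {ω | ω t = c} = {ω | ∀ i ≤ t, ω i = path h i} := by
    ext ω
    simp +contextual [past, path, le_iff_lt_or_eq, or_imp, forall_and, funext_iff, Fin.forall_iff]
  calc μ {ω | ω t = c ∧ ω (t + 1) = d}
      = ∑' h, μ ({ω | ∀ i ≤ t, ω i = path h i} ∩ {ω | ω (t + 1) = d}) := by
        rw [measure_eq_tsum_inter_fiber μ hpast]
        simp only [← hfiber, Set.inter_assoc, Set.ofPred_and]
    _ = (∑' h, μ {ω | ∀ i ≤ t, ω i = path h i}) * ENNReal.ofReal (P c d) := by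
        simp only [hμ.measure_cylinder_inter_succ, hpath, ENNReal.tsum_mul_right]
    _ = μ {ω | ω t = c} * ENNReal.ofReal (P c d) := by
        simp only [measure_eq_tsum_inter_fiber μ hpast {ω | ω t = c}, hfiber]

lemma lintegral_succ (hμ : IsMarkovLaw_s13 P x₀ μ) (f : S → ℝ≥0∞) (t : ℕ) :
    ∫⁻ ω, f (ω (t + 1)) ∂μ = ∫⁻ ω, ∑' d, ENNReal.ofReal (P (ω t) d) * f d ∂μ := by
  have hstate : Measurable fun ω : ℕ → S ↦ ω t := measurable_pi_apply t
  have hpair : Measurable fun ω : ℕ → S ↦ (ω t, ω (t + 1)) :=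
    hstate.prodMk (measurable_pi_apply (t + 1))
  have hfiber (c d : S) :
      (fun ω : ℕ → S ↦ (ω t, ω (t + 1))) ⁻¹' {(c, d)} = {ω | ω t = c ∧ ω (t + 1) = d} := by
    ext ω
    simp
  calc ∫⁻ ω, f (ω (t + 1)) ∂μ
      = ∑' c, ∑' d, f d * μ {ω | ω t = c ∧ ω (t + 1) = d} := by
        rw [← lintegral_map (f := fun x : S × S ↦ f x.2) (measurable_of_countable _) hpair,
          lintegral_countable', ENNReal.tsum_prod']
        simp only [Measure.map_apply hpair (measurableSet_singleton _), hfiber]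
    _ = ∑' c, (∑' d, ENNReal.ofReal (P c d) * f d) * μ {ω | ω t = c} := by
        simp only [hμ.measure_eq_and_succ_eq, ← ENNReal.tsum_mul_right]
        exact tsum_congr fun c ↦ tsum_congr fun d ↦ by ring
    _ = ∫⁻ ω, ∑' d, ENNReal.ofReal (P (ω t) d) * f d ∂μ := by
        rw [← lintegral_map (f := fun c ↦ ∑' d, ENNReal.ofReal (P c d) * f d)
          (measurable_of_countable _) hstate, lintegral_countable']
        simp only [Measure.map_apply hstate (measurableSet_singleton _)]
        rfl

lemma ae_forall_mem (hμ : IsMarkovLaw_s13 P x₀ μ) {A : Set S} (hx₀ : x₀ ∈ A)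
    (hA : ∀ c ∈ A, ∀ d ∉ A, P c d = 0) : ∀ᵐ ω ∂μ, ∀ t, ω t ∈ A := by
  refine ae_all_iff.2 fun t ↦ ?_
  induction t with
  | zero => filter_upwards [hμ.ae_zero_eq] with ω hω using hω ▸ hx₀
  | succ t ih =>
    have hexit : ∫⁻ ω, Aᶜ.indicator 1 (ω (t + 1)) ∂μ = 0 := by
      rw [hμ.lintegral_succ]
      refine lintegral_eq_zero_of_ae_eq_zero ?_
      filter_upwards [ih] with ω hω
      refine ENNReal.tsum_eq_zero.2 fun d ↦ ?_
      by_cases hd : d ∈ A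
      · simp [hd]
      · simp [hA _ hω d hd]
    rw [lintegral_eq_zero_iff (by fun_prop)] at hexit
    filter_upwards [hexit] with ω hω
    by_contra hmem
    simp [hmem] at hω

variable {A : Set S} {V : S → ℝ≥0∞} {δ : ℝ≥0∞}

lemma lintegral_le_add_mul (hμ : IsMarkovLaw_s13 P x₀ μ) (hA : ∀ᵐ ω ∂μ, ∀ t, ω t ∈ A)
    (hV : ∀ c ∈ A, ∑' d, ENNReal.ofReal (P c d) * V d ≤ V c + δ) (t : ℕ) :
    ∫⁻ ω, V (ω t) ∂μ ≤ V x₀ + t * δ := by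
  have := hμ.isProbabilityMeasure
  induction t with
  | zero =>
    rw [lintegral_congr_ae (g := fun _ ↦ V x₀)
      (by filter_upwards [hμ.ae_zero_eq] with ω hω; rw [hω])]
    simp
  | succ t ih =>
    calc ∫⁻ ω, V (ω (t + 1)) ∂μ
        = ∫⁻ ω, ∑' d, ENNReal.ofReal (P (ω t) d) * V d ∂μ := hμ.lintegral_succ V t
      _ ≤ ∫⁻ ω, (V (ω t) + δ) ∂μ :=
          lintegral_mono_ae (by filter_upwards [hA] with ω hω using hV _ (hω t))
      _ = ∫⁻ ω, V (ω t) ∂μ + δ := by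
          rw [lintegral_add_right _ measurable_const, lintegral_const, measure_univ, mul_one]
      _ ≤ V x₀ + t * δ + δ := by gcongr
      _ = V x₀ + (t + 1 : ℕ) * δ := by push_cast; ring

lemma measure_exists_le_le (hμ : IsMarkovLaw_s13 P x₀ μ) (hA : ∀ᵐ ω ∂μ, ∀ t, ω t ∈ A)
    (hV : ∀ c ∈ A, ∑' d, ENNReal.ofReal (P c d) * V d ≤ V c + δ) {K : ℝ≥0∞} (hK : V x₀ < K)
    (hK_top : K ≠ ∞) (N : ℕ) :
    μ {ω | ∃ t ≤ N, K ≤ V (ω t)} ≤ N * ((V x₀ + N * δ) / K) := by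
  have hmeas (t : ℕ) : Measurable fun ω : ℕ → S ↦ V (ω t) :=
    (measurable_of_countable V).comp (measurable_pi_apply t)
  have hsub : {ω | ∃ t ≤ N, K ≤ V (ω t)} ≤ᵐ[μ]
      ⋃ t ∈ Finset.Icc 1 N, {ω : ℕ → S | K ≤ V (ω t)} := by
    filter_upwards [hμ.ae_zero_eq] with ω hω ⟨t, htN, ht⟩
    have ht0 : t ≠ 0 := by
      rintro rfl
      exact hK.not_ge (hω ▸ ht)
    exact Set.mem_iUnion₂.2 ⟨t, Finset.mem_Icc.2 ⟨Nat.one_le_iff_ne_zero.2 ht0, htN⟩, ht⟩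
  calc μ {ω | ∃ t ≤ N, K ≤ V (ω t)}
      ≤ μ (⋃ t ∈ Finset.Icc 1 N, {ω | K ≤ V (ω t)}) := measure_mono_ae hsub
    _ ≤ ∑ t ∈ Finset.Icc 1 N, μ {ω | K ≤ V (ω t)} := measure_biUnion_finset_le _ _
    _ ≤ ∑ _t ∈ Finset.Icc 1 N, (V x₀ + N * δ) / K := by
        refine Finset.sum_le_sum fun t ht ↦ ?_
        have htN : t ≤ N := (Finset.mem_Icc.1 ht).2
        calc μ {ω | K ≤ V (ω t)}
            ≤ (∫⁻ ω, V (ω t) ∂μ) / K :=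
              meas_ge_le_lintegral_div (hmeas t).aemeasurable hK.ne_bot hK_top
          _ ≤ (V x₀ + t * δ) / K := by gcongr; exact hμ.lintegral_le_add_mul hA hV t
          _ ≤ (V x₀ + N * δ) / K := by gcongr
    _ = N * ((V x₀ + N * δ) / K) := by simp

end IsMarkovLaw_s13

end MarkovLaw

lemma pow_four_le_two_rpow_sqrt {x : ℝ} (hx : 1 < x) (h : 6 * √(x * Real.log x) < x) :
    x ^ 4 ≤ 2 ^ √(x * Real.log x) := by
  have hlog : 0 < Real.log x := Real.log_pos hx
  have hsqrt : 0 < √(x * Real.log x) := Real.sqrt_pos.2 (by positivity)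
  have hlog_le : 6 * Real.log x ≤ √(x * Real.log x) := by
    refine le_of_mul_le_mul_right ?_ hsqrt
    calc 6 * Real.log x * √(x * Real.log x) = 6 * √(x * Real.log x) * Real.log x := by ring
      _ ≤ x * Real.log x := by gcongr
      _ = √(x * Real.log x) * √(x * Real.log x) := (Real.mul_self_sqrt (by positivity)).symm
  rw [Real.rpow_def_of_pos two_pos, ← Real.log_le_iff_le_exp (by positivity), Real.log_pow]
  calc (4 : ℕ) * Real.log x = 2 / 3 * (6 * Real.log x) := by push_cast; ring
    _ ≤ Real.log 2 * √(x * Real.log x) := by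
        gcongr
        linarith [Real.log_two_gt_d9]

lemma mul_add_div_cube_le {m y v N : ℝ} (hm : 2 ≤ m) (hmy : m ≤ y) (hvy : v ≤ y) (hN : 0 ≤ N)
    (hNm : N ≤ m) : N * ((v + N) / y ^ 3) ≤ N * m⁻¹ := by
  have hy : 0 < y := by linarith
  have hnum : v + N ≤ y * y :=
    calc v + N ≤ 2 * y := by linarith
      _ ≤ y * y := by gcongr; exact hm.trans hmy
  gcongr
  calc (v + N) / y ^ 3 ≤ (y * y) / y ^ 3 := by gcongr
    _ = y⁻¹ := by field_simp
    _ ≤ m⁻¹ := by gcongr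

section UndecidedStateDynamics

variable {n : ℕ} {p : ℝ} {c : ℕ × ℕ × ℕ}

/-- The configurations `(x₁, x₂, u)` of `n` agents. -/
def agentConfigs (n : ℕ) : Set (ℕ × ℕ × ℕ) := {c | c.1 + c.2.1 + c.2.2 = n}

/-- The difference `Φ_up = u - x₁ - x₂` between the numbers of undecided and decided agents. -/
noncomputable def undecidedExcess (c : ℕ × ℕ × ℕ) : ℝ := (c.2.2 : ℝ) - (c.1 : ℝ) - (c.2.1 : ℝ)

/-- The potential `2 ^ (Φ_up / 2)`, the Lyapunov function for upper tails of `Φ_up`. -/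
noncomputable def excessPotential (c : ℕ × ℕ × ℕ) : ℝ := 2 ^ (undecidedExcess c / 2)

lemma undecidedExcess_le (hc : c ∈ agentConfigs n) : undecidedExcess c ≤ n := by
  have hsum : (c.1 : ℝ) + c.2.1 + c.2.2 = n := mod_cast hc
  have : (0 : ℝ) ≤ c.1 := by positivity
  have : (0 : ℝ) ≤ c.2.1 := by positivity
  unfold undecidedExcess
  linarith

lemma excessPotential_pos (c : ℕ × ℕ × ℕ) : 0 < excessPotential c := by
  unfold excessPotential
  positivity

lemma natCast_mul_excessPotential (k : ℕ) {d : ℕ × ℕ × ℕ}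
    (h : k ≠ 0 → undecidedExcess d = undecidedExcess c + 2) :
    k * excessPotential d = k * (2 * excessPotential c) := by
  rcases eq_or_ne k 0 with rfl | hk
  · simp
  · rw [excessPotential, excessPotential, h hk, add_div, div_self two_ne_zero,
      Real.rpow_add_one two_ne_zero, mul_comm (2 : ℝ)]

lemma usdStep_nonneg (hp : p ∈ Set.Icc (0 : ℝ) 1) (hc : c ∈ agentConfigs n) (d : ℕ × ℕ × ℕ) :
    0 ≤ usdStep n p c d := by
  obtain ⟨a, b, u⟩ := c
  obtain ⟨hp0, hp1⟩ := hp
  have hsum : (a : ℝ) + b + u = n := mod_cast hc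
  have : 0 ≤ 1 - p := sub_nonneg.2 hp1
  have hmoves : (2 - p) * a * b + u * (a + b) ≤ (n : ℝ) ^ 2 := by
    rw [← hsum]
    have : (0 : ℝ) ≤ a ^ 2 + b ^ 2 + u ^ 2 + p * (a * b) + a * u + b * u := by positivity
    linarith
  have hstay : 0 ≤ 1 - ((2 - p) * a * b + u * (a + b)) / (n : ℝ) ^ 2 :=
    sub_nonneg.2 (div_le_one_of_le₀ hmoves (by positivity))
  unfold usdStep
  refine add_nonneg (add_nonneg (add_nonneg (add_nonneg ?_ ?_) ?_) ?_) ?_ <;> split_ifs <;>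
    first | exact le_rfl | exact hstay | positivity

lemma usdStep_eq_zero (hc : c ∈ agentConfigs n) {d : ℕ × ℕ × ℕ} (hd : d ∉ agentConfigs n) :
    usdStep n p c d = 0 := by
  obtain ⟨a, b, u⟩ := c
  have hsum : a + b + u = n := hc
  have hmove (e : ℕ × ℕ × ℕ) (w : ℝ) (hw : w ≠ 0 → e ∈ agentConfigs n) :
      (if d = e then w else 0) = 0 := by
    rw [ite_eq_right_iff]
    rintro rfl
    exact not_not.1 fun h ↦ hd (hw h)
  unfold usdStep
  rw [hmove, hmove, hmove, hmove, hmove]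
  · norm_num
  · exact fun _ ↦ hc
  all_goals
    intro hw
    simp only [ne_eq, div_eq_zero_iff, mul_eq_zero, Nat.cast_eq_zero, not_or] at hw
    simp only [agentConfigs, Set.mem_ofPred_eq]
    lia

lemma hasSum_usdStep_mul (n : ℕ) (p : ℝ) (a b u : ℕ) (f : ℕ × ℕ × ℕ → ℝ) :
    HasSum (fun d ↦ usdStep n p (a, b, u) d * f d)
      ((1 - p) * a * b / n ^ 2 * f (a - 1, b, u + 1) + a * b / n ^ 2 * f (a, b - 1, u + 1) +
        u * a / n ^ 2 * f (a + 1, b, u - 1) + u * b / n ^ 2 * f (a, b + 1, u - 1) +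
        (1 - ((2 - p) * a * b + u * (a + b)) / n ^ 2) * f (a, b, u)) := by
  have hmove (e : ℕ × ℕ × ℕ) (w : ℝ) :
      HasSum (fun d ↦ (if d = e then w else 0) * f d) (w * f e) := by
    simpa using hasSum_single (f := fun d ↦ (if d = e then w else 0) * f d) e
      (fun d hd ↦ by simp [hd])
  simp only [usdStep, add_mul]
  exact ((((hmove _ _).add (hmove _ _)).add (hmove _ _)).add (hmove _ _)).add (hmove _ _)

lemma hasSum_usdStep_mul_excessPotential (n : ℕ) (p : ℝ) (a b u : ℕ) :
    HasSum (fun d ↦ usdStep n p (a, b, u) d * excessPotential d)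
      (excessPotential (a, b, u) * (1 + ((2 - p) * a * b - u * (a + b) / 2) / n ^ 2)) := by
  have hlose₁ : a * excessPotential (a - 1, b, u + 1) = a * (2 * excessPotential (a, b, u)) :=
    natCast_mul_excessPotential a fun h ↦ by
      simp only [undecidedExcess, Nat.cast_pred (Nat.pos_of_ne_zero h), Nat.cast_add_one]
      ring
  have hlose₂ : b * excessPotential (a, b - 1, u + 1) = b * (2 * excessPotential (a, b, u)) :=
    natCast_mul_excessPotential b fun h ↦ by
      simp only [undecidedExcess, Nat.cast_pred (Nat.pos_of_ne_zero h), Nat.cast_add_one]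
      ring
  have hgain₁ : u * excessPotential (a, b, u) = u * (2 * excessPotential (a + 1, b, u - 1)) :=
    natCast_mul_excessPotential u fun h ↦ by
      simp only [undecidedExcess, Nat.cast_pred (Nat.pos_of_ne_zero h), Nat.cast_add_one]
      ring
  have hgain₂ : u * excessPotential (a, b, u) = u * (2 * excessPotential (a, b + 1, u - 1)) :=
    natCast_mul_excessPotential u fun h ↦ by
      simp only [undecidedExcess, Nat.cast_pred (Nat.pos_of_ne_zero h), Nat.cast_add_one]
      ring
  convert hasSum_usdStep_mul n p a b u excessPotential using 1
  linear_combination (-(1 - p) * b / n ^ 2) * hlose₁ - (a / n ^ 2 : ℝ) * hlose₂ +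
    (a / (2 * n ^ 2) : ℝ) * hgain₁ + (b / (2 * n ^ 2) : ℝ) * hgain₂

lemma excessPotential_mul_one_add_drift_le (hp : 0 ≤ p) {a b u : ℕ}
    (hc : (a, b, u) ∈ agentConfigs n) :
    excessPotential (a, b, u) * (1 + ((2 - p) * a * b - u * (a + b) / 2) / n ^ 2) ≤
      excessPotential (a, b, u) + 1 := by
  have hsum : (a : ℝ) + b + u = n := mod_cast hc
  have hpos := excessPotential_pos (a, b, u)
  have hpab : 0 ≤ p * (a * b) := by positivity
  suffices excessPotential (a, b, u) * (((2 - p) * a * b - u * (a + b) / 2) / n ^ 2) ≤ 1 by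
    linarith
  rcases le_total ((a : ℝ) + b) u with hdecided | hundecided
  · have hdrift : (2 - p) * a * b - u * (a + b) / 2 ≤ (0 : ℝ) := by
      have : (a + b) * (a + b) ≤ u * ((a : ℝ) + b) := by gcongr
      linarith [sq_nonneg ((a : ℝ) - b)]
    have := mul_nonpos_of_nonneg_of_nonpos hpos.le
      (div_nonpos_of_nonpos_of_nonneg hdrift (sq_nonneg (n : ℝ)))
    linarith
  · have hle_one : excessPotential (a, b, u) ≤ 1 :=
      Real.rpow_le_one_of_one_le_of_nonpos one_le_two (by simp only [undecidedExcess]; linarith)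
    have hdrift : (2 - p) * a * b - u * (a + b) / 2 ≤ (n : ℝ) ^ 2 := by
      rw [← hsum]
      have : (0 : ℝ) ≤ a ^ 2 + b ^ 2 + u ^ 2 + 5 / 2 * (u * (a + b)) := by positivity
      linarith
    calc excessPotential (a, b, u) * (((2 - p) * a * b - u * (a + b) / 2) / n ^ 2)
        ≤ excessPotential (a, b, u) * 1 := by
          gcongr
          exact div_le_one_of_le₀ hdrift (by positivity)
      _ ≤ 1 := by simpa using hle_one

lemma tsum_usdStep_mul_excessPotential_le (hp : p ∈ Set.Icc (0 : ℝ) 1) (hc : c ∈ agentConfigs n) :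
    ∑' d, ENNReal.ofReal (usdStep n p c d) * ENNReal.ofReal (excessPotential d) ≤
      ENNReal.ofReal (excessPotential c) + 1 := by
  obtain ⟨a, b, u⟩ := c
  have hsum := hasSum_usdStep_mul_excessPotential n p a b u
  have hstep := usdStep_nonneg hp hc
  simp only [← ENNReal.ofReal_mul (hstep _)]
  rw [← ENNReal.ofReal_tsum_of_nonneg (fun d ↦ mul_nonneg (hstep d) (excessPotential_pos d).le)
    hsum.summable, hsum.tsum_eq, ← ENNReal.ofReal_one,
    ← ENNReal.ofReal_add (excessPotential_pos _).le zero_le_one]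
  exact ENNReal.ofReal_le_ofReal (excessPotential_mul_one_add_drift_le hp.1 hc)

namespace IsUSD

variable {x₀ : ℕ × ℕ × ℕ} {μ : Measure (ℕ → ℕ × ℕ × ℕ)}

lemma isMarkovLaw (hμ : IsUSD n p x₀ μ) : IsMarkovLaw_s13 (usdStep n p) x₀ μ where
  isProbabilityMeasure := hμ.1
  measureReal_cylinder t seq := by rw [measureReal_def, hμ.2 t seq]; congr

lemma ae_forall_mem_agentConfigs (hμ : IsUSD n p x₀ μ) (hx₀ : x₀ ∈ agentConfigs n) :
    ∀ᵐ ω ∂μ, ∀ t, ω t ∈ agentConfigs n :=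
  hμ.isMarkovLaw.ae_forall_mem hx₀ fun _ hc _ hd ↦ usdStep_eq_zero hc hd

lemma measureReal_exists_le_undecidedExcess_le (hμ : IsUSD n p x₀ μ) (hp : p ∈ Set.Icc (0 : ℝ) 1)
    (hx₀ : x₀ ∈ agentConfigs n) {B : ℝ} (hB : undecidedExcess x₀ < B) (N : ℕ) :
    μ.real {ω | ∃ t ≤ N, B ≤ undecidedExcess (ω t)} ≤
      N * ((excessPotential x₀ + N) / 2 ^ (B / 2)) := by
  have hK : 0 < (2 : ℝ) ^ (B / 2) := by positivity
  have hstart : ENNReal.ofReal (excessPotential x₀) < ENNReal.ofReal (2 ^ (B / 2)) :=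
    (ENNReal.ofReal_lt_ofReal_iff hK).2 <|
      Real.rpow_lt_rpow_of_exponent_lt one_lt_two (by linarith)
  have hlevel (c : ℕ × ℕ × ℕ) : ENNReal.ofReal (2 ^ (B / 2)) ≤ ENNReal.ofReal (excessPotential c) ↔
      B ≤ undecidedExcess c := by
    rw [ENNReal.ofReal_le_ofReal_iff (excessPotential_pos c).le, excessPotential,
      Real.rpow_le_rpow_left_iff one_lt_two, div_le_div_iff_of_pos_right two_pos]
  have hmarkov := hμ.isMarkovLaw.measure_exists_le_le (hμ.ae_forall_mem_agentConfigs hx₀)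
    (fun c hc ↦ tsum_usdStep_mul_excessPotential_le hp hc) hstart ENNReal.ofReal_ne_top N
  simp only [hlevel, mul_one] at hmarkov
  have hpos := excessPotential_pos x₀
  rw [← ENNReal.ofReal_natCast, ← ENNReal.ofReal_add hpos.le N.cast_nonneg,
    ← ENNReal.ofReal_div_of_pos hK, ← ENNReal.ofReal_mul N.cast_nonneg] at hmarkov
  exact ENNReal.toReal_le_of_le_ofReal (by positivity) hmarkov

lemma one_sub_le_measureReal_forall_undecidedExcess_le (hμ : IsUSD n p x₀ μ)
    (hp : p ∈ Set.Icc (0 : ℝ) 1) (hx₀ : x₀ ∈ agentConfigs n) {B : ℝ} (hB : undecidedExcess x₀ < B)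
    (N : ℕ) :
    1 - N * ((excessPotential x₀ + N) / 2 ^ (B / 2)) ≤
      μ.real {ω | ∀ t ≤ N, undecidedExcess (ω t) ≤ B} := by
  have := hμ.1
  have hcover : Set.univ ⊆ {ω : ℕ → ℕ × ℕ × ℕ | ∀ t ≤ N, undecidedExcess (ω t) ≤ B} ∪
      {ω | ∃ t ≤ N, B ≤ undecidedExcess (ω t)} := by
    intro ω _
    by_contra! h
    simp only [Set.mem_union, Set.mem_ofPred_eq, not_or, not_exists, not_and, not_le] at h
    exact h.1 fun t ht ↦ (h.2 t ht).le
  have hone : 1 ≤ μ.real {ω | ∀ t ≤ N, undecidedExcess (ω t) ≤ B} +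
      μ.real {ω | ∃ t ≤ N, B ≤ undecidedExcess (ω t)} :=
    probReal_univ.ge.trans ((measureReal_mono hcover).trans (measureReal_union_le _ _))
  linarith [hμ.measureReal_exists_le_undecidedExcess_le hp hx₀ hB N]

lemma measureReal_forall_undecidedExcess_le_eq_one (hμ : IsUSD n p x₀ μ)
    (hx₀ : x₀ ∈ agentConfigs n) {B : ℝ} (hB : n ≤ B) (N : ℕ) :
    μ.real {ω | ∀ t ≤ N, undecidedExcess (ω t) ≤ B} = 1 := by
  have := hμ.1
  have hae : {ω | ∀ t ≤ N, undecidedExcess (ω t) ≤ B} =ᵐ[μ] Set.univ := by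
    rw [Filter.eventuallyEq_univ]
    filter_upwards [hμ.ae_forall_mem_agentConfigs hx₀] with ω hω t _
    exact (undecidedExcess_le (hω t)).trans hB
  rw [measureReal_congr hae, probReal_univ]

theorem one_sub_mul_inv_le_measureReal_forall_undecidedExcess_le (hμ : IsUSD n p x₀ μ)
    (hp : p ∈ Set.Icc (0 : ℝ) 1) (hx₀ : x₀ ∈ agentConfigs n) {m r : ℝ} (hm : 2 ≤ m)
    (hmr : m ≤ 2 ^ r) (hr : undecidedExcess x₀ < 2 * r) {N : ℕ} (hN : N ≤ m) :
    1 - N * m⁻¹ ≤ μ.real {ω | ∀ t ≤ N, undecidedExcess (ω t) ≤ 6 * r} := by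
  have hr_pos : 0 < r := by
    by_contra! hr_nonpos
    linarith [Real.rpow_le_one_of_one_le_of_nonpos one_le_two hr_nonpos]
  have hstart : excessPotential x₀ ≤ 2 ^ r :=
    Real.rpow_le_rpow_of_exponent_le one_le_two (by linarith)
  have hlevel : (2 : ℝ) ^ (6 * r / 2) = (2 ^ r) ^ 3 := by
    rw [← Real.rpow_mul_natCast two_pos.le]
    congr 1
    push_cast
    ring
  have hchain := hμ.one_sub_le_measureReal_forall_undecidedExcess_le hp hx₀
    (B := 6 * r) (by linarith) N
  rw [hlevel] at hchain
  linarith [mul_add_div_cube_le hm hmr hstart N.cast_nonneg hN]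

end IsUSD

end UndecidedStateDynamics

/-- Let `p ∈ [0,1]`, `ξ ≥ 1`, and `Φ_up(t) = U(t) - X₁(t) - X₂(t)`.
If `USD_p` is started from a configuration with `Φ_up(0) < 2ξ·√(n·log n)`, then for every
constant `α > 0`, with probability at least `1 - α·n⁻³·log² n` we have
`Φ_up(t) ≤ 6ξ·√(n·log n)` for all `t ≤ α·n·log² n`. -/
theorem stmt_13 (n : ℕ) (hn : 2 ≤ n) (p : ℝ) (hp : p ∈ Set.Icc (0 : ℝ) 1)
    (ξ : ℝ) (hξ : 1 ≤ ξ)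
    (x0 : ℕ × ℕ × ℕ) (hx0 : x0.1 + x0.2.1 + x0.2.2 = n)
    (hphi : (x0.2.2 : ℝ) - (x0.1 : ℝ) - (x0.2.1 : ℝ) < 2 * ξ * Real.sqrt (n * Real.log n))
    (μ : Measure (ℕ → ℕ × ℕ × ℕ)) (hμ : IsUSD n p x0 μ)
    (α : ℝ) (hα : 0 < α) :
    1 - α * ((n : ℝ) ^ 3)⁻¹ * (Real.log n) ^ 2 ≤
      (μ {ω | ∀ t : ℕ, (t : ℝ) ≤ α * n * (Real.log n) ^ 2 →
            ((ω t).2.2 : ℝ) - ((ω t).1 : ℝ) - ((ω t).2.1 : ℝ) ≤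
              6 * ξ * Real.sqrt (n * Real.log n)}).toReal := by
  have hn1 : (1 : ℝ) < n := mod_cast hn
  have hn4 : (2 : ℝ) ≤ n ^ 4 := mod_cast hn.trans (Nat.le_self_pow four_ne_zero n)
  have hLξ : √(n * Real.log n) ≤ ξ * √(n * Real.log n) :=
    le_mul_of_one_le_left (Real.sqrt_nonneg _) hξ
  have hT : 0 ≤ α * n * Real.log n ^ 2 := by positivity
  have hfailure : α * ((n : ℝ) ^ 3)⁻¹ * Real.log n ^ 2 =
      α * n * Real.log n ^ 2 * ((n : ℝ) ^ 4)⁻¹ := by field_simp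
  simp only [← Nat.le_floor_iff hT, hfailure]
  rcases le_or_gt (n : ℝ) (6 * √(n * Real.log n)) with hsmall | hlarge
  · refine le_of_le_of_eq (sub_le_self 1 (by positivity))
      (hμ.measureReal_forall_undecidedExcess_le_eq_one hx0 ?_ _).symm
    linarith
  rcases le_or_gt ((n : ℝ) ^ 4) (α * n * Real.log n ^ 2) with hlong | hshort
  · refine le_trans (sub_nonpos.2 ?_) ENNReal.toReal_nonneg
    rwa [← div_eq_mul_inv, one_le_div (by positivity)]
  · have hN : (⌊α * n * Real.log n ^ 2⌋₊ : ℝ) ≤ α * n * Real.log n ^ 2 := Nat.floor_le hT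
    have hscale : (n : ℝ) ^ 4 ≤ 2 ^ (ξ * √(n * Real.log n)) :=
      (pow_four_le_two_rpow_sqrt hn1 hlarge).trans
        (Real.rpow_le_rpow_of_exponent_le one_le_two hLξ)
    have htail := hμ.one_sub_mul_inv_le_measureReal_forall_undecidedExcess_le hp hx0 hn4 hscale
      (by rwa [← mul_assoc]) (hN.trans hshort.le)
    rw [← mul_assoc] at htail
    refine le_trans ?_ htail
    gcongr
end
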